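/- For every dimension d ≥ 1 there exists a constant c > 0 independent of the mesh size h and the spline degree p (possibly depending on d) such that the a(·,·)-orthogonal (Galerkin) projector T_c : S^d → (S_c)^d onto the coarse tensor product spline space satisfies ‖u − T_c u‖_{L2(Ω)} ≤ c · h · (a(u,u))^{1/2} for all u ∈ S^d. -/

import Mathlib

noncomputable section

open MeasureTheory Set

namespace SplineMG

/-- The `j`-th piece of the uniform partition of `[0,1]` into `m` subintervals of
length `h = 1/m`; the first and last pieces are extended to `-∞` resp. `+∞`
(the spline is extended polynomially outside `[0,1]`). -/
def pieceSet (m j : ℕ) : Set ℝ :=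
  (if j = 0 then Iic ((1 : ℝ) / m) else Icc ((j : ℝ) / m) (((j : ℝ) + 1) / m)) ∪
  (if j = m - 1 then Ici (((m : ℝ) - 1) / m) else ∅)

/-- `u : ℝ → ℝ` belongs to the univariate spline space `S` of degree `p` and maximal
smoothness `C^{p-1}` on the uniform partition of `(0,1)` into `m` intervals of
length `h = 1/m`. -/
def IsSpline (m p : ℕ) (u : ℝ → ℝ) : Prop :=
  ContDiffOn ℝ (p - 1 : ℕ) u (Ioo (0 : ℝ) 1) ∧
  ∀ j < m, ∃ q : Polynomial ℝ, q.natDegree ≤ p ∧ ∀ x ∈ pieceSet m j, u x = q.eval x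

/-- `u` belongs to the subspace `S₀` of `S`: all odd derivatives of order `< p`
vanish at both endpoints. -/
def IsSpline0 (m p : ℕ) (u : ℝ → ℝ) : Prop :=
  IsSpline m p u ∧
  ∀ l : ℕ, 2 * l + 1 < p →
    iteratedDeriv (2 * l + 1) u 0 = 0 ∧ iteratedDeriv (2 * l + 1) u 1 = 0

/-- The `L²(0,1)` inner product. -/
def ip0 (u v : ℝ → ℝ) : ℝ := ∫ x in Ioo (0 : ℝ) 1, u x * v x

/-- The squared `L²(0,1)` norm `‖u‖₀²`. -/
def l2normSq (u : ℝ → ℝ) : ℝ := ∫ x in Ioo (0 : ℝ) 1, u x ^ 2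

/-- The `L²(0,1)` norm `‖u‖₀`. -/
def l2norm (u : ℝ → ℝ) : ℝ := Real.sqrt (l2normSq u)

/-- The squared `H¹(0,1)` seminorm `|u|₁²`. -/
def h1semiSq (u : ℝ → ℝ) : ℝ := ∫ x in Ioo (0 : ℝ) 1, deriv u x ^ 2

/-- The `H¹(0,1)` seminorm `|u|₁`. -/
def h1semi (u : ℝ → ℝ) : ℝ := Real.sqrt (h1semiSq u)

/-- The squared full `H¹(0,1)` norm. -/
def h1normSq (u : ℝ → ℝ) : ℝ := l2normSq u + h1semiSq u

/-- `u` belongs to `S₁`, the `L²(0,1)`-orthogonal complement of `S₀` in `S`. -/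
def IsSpline1 (m p : ℕ) (u : ℝ → ℝ) : Prop :=
  IsSpline m p u ∧ ∀ v, IsSpline0 m p v → ip0 u v = 0

/-- `v = Q₀ u` is the `L²(0,1)`-orthogonal projection of `u` onto `S₀`. -/
def IsL2Proj0 (m p : ℕ) (u v : ℝ → ℝ) : Prop :=
  IsSpline0 m p v ∧ ∀ w, IsSpline0 m p w → ip0 (u - v) w = 0

/-- The component predicate: `false ↦ S₀`, `true ↦ S₁`. -/
def IsSplineC (m p : ℕ) : Bool → (ℝ → ℝ) → Prop
  | false => IsSpline0 m p
  | true => IsSpline1 m p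

/-- The tensor-product spline space `S^d = S ⊗ ⋯ ⊗ S` on `(0,1)^d`. -/
def TensorSpline (d m p : ℕ) : Submodule ℝ ((Fin d → ℝ) → ℝ) :=
  Submodule.span ℝ {u | ∃ f : Fin d → ℝ → ℝ, (∀ i, IsSpline m p (f i)) ∧
    u = fun x => ∏ i, f i (x i)}

/-- The subspace `S_α = S_{α₁} ⊗ ⋯ ⊗ S_{α_d}` of `S^d`, for `α ∈ {0,1}^d`
(`false ↦ 0`, `true ↦ 1`). -/
def TensorSplineSub (d m p : ℕ) (α : Fin d → Bool) : Submodule ℝ ((Fin d → ℝ) → ℝ) :=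
  Submodule.span ℝ {u | ∃ f : Fin d → ℝ → ℝ, (∀ i, IsSplineC m p (α i) (f i)) ∧
    u = fun x => ∏ i, f i (x i)}

/-- The open unit cube `Ω = (0,1)^d`. -/
def cube (d : ℕ) : Set (Fin d → ℝ) := Set.univ.pi fun _ => Ioo (0 : ℝ) 1

/-- The `i`-th partial derivative. -/
def pd (d : ℕ) (i : Fin d) (u : (Fin d → ℝ) → ℝ) : (Fin d → ℝ) → ℝ :=
  fun x => deriv (fun t => u (Function.update x i t)) (x i)

/-- The `L²(Ω)` inner product on the unit cube. -/
def ipd (d : ℕ) (u v : (Fin d → ℝ) → ℝ) : ℝ := ∫ x in cube d, u x * v x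

/-- The squared `L²(Ω)` norm. -/
def l2normSqD (d : ℕ) (u : (Fin d → ℝ) → ℝ) : ℝ := ∫ x in cube d, u x ^ 2

/-- The bilinear form `a(u,v) = ∫_Ω (∇u·∇v + uv) dx`. -/
def aForm (d : ℕ) (u v : (Fin d → ℝ) → ℝ) : ℝ :=
  ∫ x in cube d, (∑ i, pd d i u x * pd d i v x) + u x * v x

/-- The squared `H¹(Ω)` seminorm. -/
def h1semiSqD (d : ℕ) (u : (Fin d → ℝ) → ℝ) : ℝ :=
  ∫ x in cube d, ∑ i, pd d i u x ^ 2

/-- The squared full `H¹(Ω)` norm. -/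
def h1normSqD (d : ℕ) (u : (Fin d → ℝ) → ℝ) : ℝ := l2normSqD d u + h1semiSqD d u

/-- `v = Q_α u` is the `L²(Ω)`-orthogonal projection of `u` onto `S_α`. -/
def IsL2ProjSub (d m p : ℕ) (α : Fin d → Bool) (u v : (Fin d → ℝ) → ℝ) : Prop :=
  v ∈ TensorSplineSub d m p α ∧ ∀ w ∈ TensorSplineSub d m p α, ipd d (u - v) w = 0

/-- The coarse tensor-product spline space `(S_c)^d` (with `m/2` knot spans of
width `2h` per direction). -/
def TensorSplineCoarse (d m p : ℕ) : Submodule ℝ ((Fin d → ℝ) → ℝ) :=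
  TensorSpline d (m / 2) p

/-- `v = T_c u` is the `a(·,·)`-orthogonal (Galerkin) projection of `u` onto `(S_c)^d`. -/
def IsGalerkinCoarseProj (d m p : ℕ) (u v : (Fin d → ℝ) → ℝ) : Prop :=
  v ∈ TensorSplineCoarse d m p ∧ ∀ w ∈ TensorSplineCoarse d m p, aForm d (u - v) w = 0

end SplineMG

namespace SplineMG

/-!
Tensor products of an `L²`-orthonormal, `H¹`-orthogonal basis of the univariate fine splines
diagonalise both `‖·‖²` and `a(·,·)`, so everything reduces to coefficients. Write the error as
`e = u - T_c u` and let `z` have the coefficients of `e` divided by the eigenvalues of `a`. Then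
`‖e‖² = a(e, z) = a(e, z - (R ⊗ ⋯ ⊗ R) z)` for every operator `R` from fine to coarse univariate
splines, and the tensor product is replaced by the identity one direction at a time. This needs an
`R` which is stable and approximates to first order, in `L²` and in `H¹`, with constants independent
of `h` and `p`: the Ritz projection composed with a spectral cutoff at frequency `1 / h`.

The estimates for the Ritz projection follow from the fact that `K f = ∫₀ f` is approximated by
derivatives of coarse splines up to `h ‖f‖`. For degree `1` these are step functions. The constant
does not grow with the degree because, with `X` the derivatives of splines of degree `p` and `Q` the
orthogonal projection onto `X`, `K X` consists of derivatives of splines of degree `p + 1`, and `K`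
is skew-adjoint on the complement of `X ∋ 1`, so that `K (f - Q f)` inherits the bound `h ‖f‖`.
-/

section WeightedSquares

variable {κ : Type*} [Fintype κ]

/-- The weighted square sum `∑ ω c²` of a coefficient family: in a basis that diagonalises a
quadratic form this is the value of the form. -/
def wsq (ω c : κ → ℝ) : ℝ := ∑ k, ω k * c k ^ 2

lemma wsq_nonneg {ω : κ → ℝ} (hω : 0 ≤ ω) (c : κ → ℝ) : 0 ≤ wsq ω c :=
  Finset.sum_nonneg fun k _ ↦ mul_nonneg (hω k) (sq_nonneg _)

lemma wsq_add_weight (ω₁ ω₂ c : κ → ℝ) : wsq (ω₁ + ω₂) c = wsq ω₁ c + wsq ω₂ c := by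
  simp only [wsq, Pi.add_apply, add_mul, Finset.sum_add_distrib]

lemma wsq_smul_weight (r : ℝ) (ω c : κ → ℝ) : wsq (r • ω) c = r * wsq ω c := by
  simp only [wsq, Pi.smul_apply, smul_eq_mul, Finset.mul_sum, mul_assoc]

lemma wsq_add_le {ω : κ → ℝ} (hω : 0 ≤ ω) (x y : κ → ℝ) :
    wsq ω (x + y) ≤ 2 * wsq ω x + 2 * wsq ω y := by
  simp only [wsq, Finset.mul_sum, ← Finset.sum_add_distrib, Pi.add_apply]
  refine Finset.sum_le_sum fun k _ ↦ ?_
  linarith [mul_le_mul_of_nonneg_left (add_sq_le (a := x k) (b := y k)) (hω k)]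

lemma wsq_sub_le {ω : κ → ℝ} (hω : 0 ≤ ω) (x y : κ → ℝ) :
    wsq ω (x - y) ≤ 2 * wsq ω x + 2 * wsq ω y := by
  have hneg : wsq ω (-y) = wsq ω y := by simp [wsq]
  simpa only [sub_eq_add_neg, hneg] using wsq_add_le hω x (-y)

end WeightedSquares

section SpectralCutoff

open scoped Matrix

variable {ι : Type*} [Fintype ι] [DecidableEq ι]

/-- `R` is stable with constant `C` and approximates the identity of order one with constant `D`,
in every norm `A ‖·‖² + |·|₁²`, `A ≥ 0`, where `|x|₁² = ∑ l x²`. -/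
structure StableApprox (R : Matrix ι ι ℝ) (l : ι → ℝ) (C D : ℝ) : Prop where
  stable : ∀ A : ℝ, 0 ≤ A → ∀ x, wsq (fun a ↦ A + l a) (R *ᵥ x) ≤ C * wsq (fun a ↦ A + l a) x
  approx : ∀ A : ℝ, 0 ≤ A → ∀ x,
    wsq (fun a ↦ A + l a) (x - R *ᵥ x) ≤ D * wsq (fun a ↦ (A + l a) * l a) x

/-- The diagonal matrix that discards the modes with `δ² l > 1`. -/
def spectralCutoff (l : ι → ℝ) (δ : ℝ) : Matrix ι ι ℝ :=
  Matrix.diagonal fun a ↦ if δ ^ 2 * l a ≤ 1 then 1 else 0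

lemma spectralCutoff_mulVec_apply (l : ι → ℝ) (δ : ℝ) (x : ι → ℝ) (a : ι) :
    (spectralCutoff l δ *ᵥ x) a = if δ ^ 2 * l a ≤ 1 then x a else 0 := by
  simp [spectralCutoff, Matrix.mulVec_diagonal]

variable {l ω : ι → ℝ} {δ : ℝ}

lemma wsq_mul_spectralCutoff_le (hω : 0 ≤ ω) (x : ι → ℝ) :
    δ ^ 2 * wsq (ω * l) (spectralCutoff l δ *ᵥ x) ≤ wsq ω (spectralCutoff l δ *ᵥ x) := by
  rw [wsq, Finset.mul_sum]
  refine Finset.sum_le_sum fun a _ ↦ ?_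
  rw [spectralCutoff_mulVec_apply, Pi.mul_apply]
  split_ifs with h
  · have := mul_le_mul_of_nonneg_left h (mul_nonneg (hω a) (sq_nonneg (x a)))
    linarith
  · simp

lemma wsq_sub_spectralCutoff_le (hω : 0 ≤ ω) (x : ι → ℝ) :
    wsq ω (x - spectralCutoff l δ *ᵥ x) ≤ δ ^ 2 * wsq (ω * l) (x - spectralCutoff l δ *ᵥ x) := by
  simp only [wsq, Finset.mul_sum]
  refine Finset.sum_le_sum fun a _ ↦ ?_
  rw [Pi.sub_apply, spectralCutoff_mulVec_apply, Pi.mul_apply]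
  split_ifs with h
  · simp
  · have := mul_le_mul_of_nonneg_left (not_le.1 h).le (mul_nonneg (hω a) (sq_nonneg (x a)))
    rw [sub_zero]
    linarith

lemma wsq_spectralCutoff_add_wsq_sub (ω l : ι → ℝ) (δ : ℝ) (x : ι → ℝ) :
    wsq ω (spectralCutoff l δ *ᵥ x) + wsq ω (x - spectralCutoff l δ *ᵥ x) = wsq ω x := by
  simp only [wsq, ← Finset.sum_add_distrib]
  refine Finset.sum_congr rfl fun a _ ↦ ?_
  rw [Pi.sub_apply, spectralCutoff_mulVec_apply]
  split_ifs <;> simp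

variable {P : Matrix ι ι ℝ}

lemma wsq_mul_spectralCutoff_mulVec_le (hω : 0 ≤ ω)
    (hP : ∀ x, wsq ω (x - P *ᵥ x) ≤ δ ^ 2 * wsq (ω * l) x) (x : ι → ℝ) :
    wsq ω ((P * spectralCutoff l δ) *ᵥ x) ≤ 4 * wsq ω x := by
  rw [← Matrix.mulVec_mulVec]
  set y := spectralCutoff l δ *ᵥ x
  have hy : wsq ω y ≤ wsq ω x := by
    linarith [wsq_spectralCutoff_add_wsq_sub ω l δ x, wsq_nonneg hω (x - y)]
  calc wsq ω (P *ᵥ y) = wsq ω (y - (y - P *ᵥ y)) := by rw [sub_sub_cancel]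
    _ ≤ 2 * wsq ω y + 2 * wsq ω (y - P *ᵥ y) := wsq_sub_le hω _ _
    _ ≤ 2 * wsq ω y + 2 * wsq ω y := by
        gcongr; exact (hP y).trans (wsq_mul_spectralCutoff_le hω x)
    _ ≤ 4 * wsq ω x := by linarith

lemma wsq_sub_mul_spectralCutoff_mulVec_le (hω : 0 ≤ ω)
    (hP : ∀ x, wsq ω (x - P *ᵥ x) ≤ δ ^ 2 * wsq (ω * l) x) (x : ι → ℝ) :
    wsq ω (x - (P * spectralCutoff l δ) *ᵥ x) ≤ 2 * δ ^ 2 * wsq (ω * l) x := by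
  rw [← Matrix.mulVec_mulVec]
  set y := spectralCutoff l δ *ᵥ x
  calc wsq ω (x - P *ᵥ y) = wsq ω ((x - y) + (y - P *ᵥ y)) := by rw [sub_add_sub_cancel]
    _ ≤ 2 * wsq ω (x - y) + 2 * wsq ω (y - P *ᵥ y) := wsq_add_le hω _ _
    _ ≤ 2 * (δ ^ 2 * wsq (ω * l) (x - y)) + 2 * (δ ^ 2 * wsq (ω * l) y) := by
        gcongr
        exacts [wsq_sub_spectralCutoff_le hω x, hP y]
    _ = 2 * δ ^ 2 * wsq (ω * l) x := by
        rw [← wsq_spectralCutoff_add_wsq_sub (ω * l) l δ x]; ring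

/-- The cutoff turns an approximation property into stability, because on the retained modes
`δ² l ≤ 1`; on the discarded modes `1 < δ² l` absorbs the loss of accuracy. -/
theorem StableApprox.mul_spectralCutoff (hl : 0 ≤ l)
    (hP₀ : ∀ x, wsq 1 (x - P *ᵥ x) ≤ δ ^ 2 * wsq l x)
    (hP₁ : ∀ x, wsq l (x - P *ᵥ x) ≤ δ ^ 2 * wsq (l ^ 2) x) :
    StableApprox (P * spectralCutoff l δ) l 4 (2 * δ ^ 2) := by
  have hω : ∀ A : ℝ, 0 ≤ A → 0 ≤ fun a ↦ A + l a := fun A hA a ↦ add_nonneg hA (hl a)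
  have hP : ∀ A : ℝ, 0 ≤ A → ∀ x,
      wsq (fun a ↦ A + l a) (x - P *ᵥ x) ≤ δ ^ 2 * wsq ((fun a ↦ A + l a) * l) x := by
    intro A hA x
    have hsplit₀ : (fun a ↦ A + l a) = A • (1 : ι → ℝ) + l := by ext a; simp
    have hsplit₁ : (fun a ↦ A + l a) * l = A • l + l ^ 2 := by
      ext a; simp only [Pi.mul_apply, Pi.add_apply, Pi.smul_apply, Pi.pow_apply, smul_eq_mul]; ring
    rw [hsplit₁, hsplit₀]
    simp only [wsq_add_weight, wsq_smul_weight]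
    linear_combination A * hP₀ x + hP₁ x
  exact ⟨fun A hA ↦ wsq_mul_spectralCutoff_mulVec_le (hω A hA) (hP A hA),
    fun A hA ↦ wsq_sub_mul_spectralCutoff_mulVec_le (hω A hA) (hP A hA)⟩

end SpectralCutoff

section EnergyWeight

variable {κ ι : Type*} [Fintype κ] {l : ι → ℝ}

/-- The eigenvalue `1 + ∑ᵢ l(kᵢ)` of the form `a(·,·)` on the tensor product of one-dimensional
modes with eigenvalues `l`. -/
def energyWeight (l : ι → ℝ) (k : κ → ι) : ℝ := 1 + ∑ i, l (k i)

lemma one_le_energyWeight (hl : 0 ≤ l) (k : κ → ι) : 1 ≤ energyWeight l k :=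
  le_add_of_nonneg_right (Finset.sum_nonneg fun i _ ↦ hl (k i))

lemma energyWeight_nonneg (hl : 0 ≤ l) : (0 : (κ → ι) → ℝ) ≤ energyWeight l :=
  fun k ↦ zero_le_one.trans (one_le_energyWeight hl k)

lemma exists_energyWeight_update [DecidableEq κ] (hl : 0 ≤ l) (i : κ) (k : κ → ι) :
    ∃ A : ℝ, 0 ≤ A ∧ ∀ a, energyWeight l (Function.update k i a) = A + l a := by
  refine ⟨1 + ∑ j ∈ Finset.univ.erase i, l (k j),
    add_nonneg zero_le_one (Finset.sum_nonneg fun j _ ↦ hl (k j)), fun a ↦ ?_⟩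
  have hrest : ∑ j ∈ Finset.univ.erase i, l (Function.update k i a j) =
      ∑ j ∈ Finset.univ.erase i, l (k j) :=
    Finset.sum_congr rfl fun j hj ↦ by rw [Function.update_of_ne (Finset.ne_of_mem_erase hj)]
  rw [energyWeight, ← Finset.sum_erase_add _ _ (Finset.mem_univ i), hrest, Function.update_self]
  ring

lemma wsq_mul_sub_one_div_le {α : Type*} [Fintype α] {ω : α → ℝ} (hω : ∀ k, 1 ≤ ω k)
    (e : α → ℝ) : wsq (fun k ↦ ω k * (ω k - 1)) (fun k ↦ e k / ω k) ≤ wsq 1 e := by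
  refine Finset.sum_le_sum fun k _ ↦ ?_
  have hk : 0 < ω k := one_pos.trans_le (hω k)
  have : ω k * (ω k - 1) * (e k / ω k) ^ 2 = e k ^ 2 - e k ^ 2 / ω k := by field_simp
  rw [this, Pi.one_apply, one_mul, sub_le_self_iff]
  positivity

end EnergyWeight

section TensorCoefficients

open scoped Matrix

variable {κ ι : Type*} [DecidableEq κ] [Fintype ι]

/-- The matrix `R` acting on the `i`-th index of a tensor of coefficients. -/
def dirOp (R : Matrix ι ι ℝ) (i : κ) (c : (κ → ι) → ℝ) (k : κ → ι) : ℝ :=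
  (R *ᵥ fun b ↦ c (Function.update k i b)) (k i)

lemma dirOp_one_sub [DecidableEq ι] (R : Matrix ι ι ℝ) (i : κ) (c : (κ → ι) → ℝ) :
    dirOp (1 - R) i c = c - dirOp R i c := by
  ext k; simp [dirOp, Matrix.sub_mulVec]

lemma dirOp_sub (R : Matrix ι ι ℝ) (i : κ) (c c' : (κ → ι) → ℝ) :
    dirOp R i (c - c') = dirOp R i c - dirOp R i c' := by
  ext k; simp only [dirOp, Pi.sub_apply]; rw [← Pi.sub_apply (R *ᵥ _), ← Matrix.mulVec_sub]; rfl

lemma dirOp_update (R : Matrix ι ι ℝ) (i : κ) (c : (κ → ι) → ℝ) (k : κ → ι) (a : ι) :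
    dirOp R i c (Function.update k i a) = (R *ᵥ fun b ↦ c (Function.update k i b)) a := by
  simp [dirOp]

/-- The matrix `R` acting on all indices listed in `L`. -/
def dirOps (R : Matrix ι ι ℝ) (L : List κ) (c : (κ → ι) → ℝ) : (κ → ι) → ℝ :=
  L.foldr (dirOp R) c

@[simp]
lemma dirOps_nil (R : Matrix ι ι ℝ) (c : (κ → ι) → ℝ) : dirOps R [] c = c := rfl

@[simp]
lemma dirOps_cons (R : Matrix ι ι ℝ) (i : κ) (L : List κ) (c : (κ → ι) → ℝ) :
    dirOps R (i :: L) c = dirOp R i (dirOps R L c) := rfl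

variable [Fintype κ]

lemma sum_sum_update_comm (i : κ) (G : (κ → ι) → ι → ℝ) :
    ∑ k, ∑ b, G k b = ∑ k, ∑ a, G (Function.update k i a) (k i) := by
  rw [← Finset.sum_product', ← Finset.sum_product']
  refine Finset.sum_nbij' (fun x ↦ (Function.update x.1 i x.2, x.1 i))
    (fun x ↦ (Function.update x.1 i x.2, x.1 i)) ?_ ?_ ?_ ?_ ?_ <;> simp

lemma sum_sum_update (i : κ) (F : (κ → ι) → ℝ) :
    ∑ k, ∑ a, F (Function.update k i a) = Fintype.card ι * ∑ k, F k := by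
  rw [sum_sum_update_comm i fun k b ↦ F (Function.update k i b)]
  simp [Finset.mul_sum]

lemma sum_le_sum_of_forall_sum_update_le (i : κ) {F G : (κ → ι) → ℝ}
    (h : ∀ k, ∑ a, F (Function.update k i a) ≤ ∑ a, G (Function.update k i a)) :
    ∑ k, F k ≤ ∑ k, G k := by
  rcases isEmpty_or_nonempty (κ → ι) with _ | ⟨⟨k⟩⟩
  · simp
  · have hsum := Finset.sum_le_sum fun k (_ : k ∈ Finset.univ) ↦ h k
    rw [sum_sum_update, sum_sum_update] at hsum
    have : Nonempty ι := ⟨k i⟩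
    exact le_of_mul_le_mul_left hsum (mod_cast Fintype.card_pos)

lemma wsq_dirOp_le (T : Matrix ι ι ℝ) (i : κ) {ω ω' : (κ → ι) → ℝ} {C : ℝ}
    (h : ∀ k x, wsq (fun a ↦ ω (Function.update k i a)) (T *ᵥ x) ≤
      C * wsq (fun a ↦ ω' (Function.update k i a)) x) (c : (κ → ι) → ℝ) :
    wsq ω (dirOp T i c) ≤ C * wsq ω' c := by
  rw [wsq, wsq, Finset.mul_sum]
  refine sum_le_sum_of_forall_sum_update_le i fun k ↦ ?_
  simpa only [dirOp_update, wsq, Finset.mul_sum] using h k fun b ↦ c (Function.update k i b)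

lemma sum_dirOp_mul_prod (R : Matrix ι ι ℝ) (i : κ) (c : (κ → ι) → ℝ) (ψ : κ → ι → ℝ) :
    ∑ k, dirOp R i c k * ∏ j, ψ j (k j) =
      ∑ k, c k * ∏ j, (Function.update ψ i (Rᵀ *ᵥ ψ i)) j (k j) := by
  have hprod : ∀ (χ : κ → ι → ℝ) (k : κ → ι),
      ∏ j, χ j (k j) = χ i (k i) * ∏ j ∈ Finset.univ.erase i, χ j (k j) := fun χ k ↦
    (Finset.mul_prod_erase Finset.univ (fun j ↦ χ j (k j)) (Finset.mem_univ i)).symm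
  have hrest : ∀ (k : κ → ι) (a : ι),
      ∏ j ∈ Finset.univ.erase i, ψ j (Function.update k i a j) =
        ∏ j ∈ Finset.univ.erase i, Function.update ψ i (Rᵀ *ᵥ ψ i) j (k j) := fun k a ↦
    Finset.prod_congr rfl fun j hj ↦ by
      rw [Function.update_of_ne (Finset.ne_of_mem_erase hj),
        Function.update_of_ne (Finset.ne_of_mem_erase hj)]
  simp only [dirOp, Matrix.mulVec, dotProduct, Finset.sum_mul]
  rw [sum_sum_update_comm i]
  refine Finset.sum_congr rfl fun k _ ↦ ?_
  simp only [hprod, hrest, Function.update_self, Function.update_idem, Function.update_eq_self,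
    Matrix.mulVec, dotProduct, Matrix.transpose_apply, Finset.sum_mul, Finset.mul_sum]
  exact Finset.sum_congr rfl fun a _ ↦ by ring

lemma sum_dirOps_mul_prod (R : Matrix ι ι ℝ) {L : List κ} (hL : L.Nodup) (c : (κ → ι) → ℝ)
    (ψ : κ → ι → ℝ) :
    ∑ k, dirOps R L c k * ∏ j, ψ j (k j) =
      ∑ k, c k * ∏ j, (if j ∈ L then Rᵀ *ᵥ ψ j else ψ j) (k j) := by
  induction L generalizing ψ with
  | nil => simp
  | cons i L ih =>
    obtain ⟨hi, hL⟩ := List.nodup_cons.1 hL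
    rw [dirOps_cons, sum_dirOp_mul_prod, ih hL]
    refine Finset.sum_congr rfl fun k _ ↦ congrArg (c k * ·) (Finset.prod_congr rfl fun j _ ↦ ?_)
    obtain rfl | hj := eq_or_ne j i
    · simp [hi]
    · simp [hj]

variable {R : Matrix ι ι ℝ} {l : ι → ℝ} {C D : ℝ}

lemma StableApprox.wsq_dirOp_le (h : StableApprox R l C D) (hl : 0 ≤ l) (i : κ)
    (c : (κ → ι) → ℝ) :
    wsq (energyWeight l) (dirOp R i c) ≤ C * wsq (energyWeight l) c := by
  refine SplineMG.wsq_dirOp_le R i (fun k x ↦ ?_) c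
  obtain ⟨A, hA, hk⟩ := exists_energyWeight_update hl i k
  simpa only [hk] using h.stable A hA x

lemma StableApprox.wsq_sub_dirOp_le (h : StableApprox R l C D) (hl : 0 ≤ l) (i : κ)
    (c : (κ → ι) → ℝ) :
    wsq (energyWeight l) (c - dirOp R i c) ≤
      D * wsq (fun k ↦ energyWeight l k * l (k i)) c := by
  classical
  rw [← dirOp_one_sub]
  refine SplineMG.wsq_dirOp_le (1 - R) i (fun k x ↦ ?_) c
  obtain ⟨A, hA, hk⟩ := exists_energyWeight_update hl i k
  simpa only [hk, Function.update_self, Matrix.sub_mulVec, Matrix.one_mulVec] using h.approx A hA x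

lemma StableApprox.wsq_sub_dirOps_le (h : StableApprox R l C D) (hl : 0 ≤ l) (hC : 1 ≤ C)
    (hD : 0 ≤ D) (L : List κ) (c : (κ → ι) → ℝ) :
    wsq (energyWeight l) (c - dirOps R L c) ≤
      (2 * C) ^ L.length * D *
        wsq (fun k ↦ energyWeight l k * (L.map fun i ↦ l (k i)).sum) c := by
  have hω := energyWeight_nonneg (κ := κ) hl
  induction L with
  | nil => simp [wsq]
  | cons i L ih =>
    set W := wsq (fun k ↦ energyWeight l k * (L.map fun i ↦ l (k i)).sum) c
    set Wᵢ := wsq (fun k ↦ energyWeight l k * l (k i)) c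
    have hWᵢ : 0 ≤ Wᵢ := wsq_nonneg (fun k ↦ mul_nonneg (hω k) (hl _)) c
    have hsplit : wsq (fun k ↦ energyWeight l k * ((i :: L).map fun i ↦ l (k i)).sum) c =
        Wᵢ + W := by
      rw [← wsq_add_weight]
      simp only [List.map_cons, List.sum_cons, mul_add, Pi.add_def]
    have hpow : 2 ≤ (2 * C) ^ (L.length + 1) := by
      rw [pow_succ]
      nlinarith [one_le_pow₀ (n := L.length) (by linarith : 1 ≤ 2 * C)]
    calc wsq (energyWeight l) (c - dirOps R (i :: L) c)
        = wsq (energyWeight l) ((c - dirOp R i c) + dirOp R i (c - dirOps R L c)) := by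
          rw [dirOps_cons, dirOp_sub, sub_add_sub_cancel]
      _ ≤ 2 * (D * Wᵢ) + 2 * (C * ((2 * C) ^ L.length * D * W)) := by
          refine (wsq_add_le hω _ _).trans ?_
          gcongr
          · exact h.wsq_sub_dirOp_le hl i c
          · exact (h.wsq_dirOp_le hl i _).trans (by gcongr)
      _ ≤ (2 * C) ^ (L.length + 1) * (D * Wᵢ) + (2 * C) ^ (L.length + 1) * (D * W) := by
          gcongr ?_ * (D * Wᵢ) + ?_
          exact le_of_eq (by ring)
      _ = _ := by rw [hsplit, List.length_cons]; ring

lemma StableApprox.wsq_sub_dirOps_univ_le (h : StableApprox R l C D) (hl : 0 ≤ l) (hC : 1 ≤ C)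
    (hD : 0 ≤ D) (e : (κ → ι) → ℝ) :
    wsq (energyWeight l) ((fun k ↦ e k / energyWeight l k) -
        dirOps R Finset.univ.toList fun k ↦ e k / energyWeight l k) ≤
      (2 * C) ^ Fintype.card κ * D * wsq 1 e := by
  refine (h.wsq_sub_dirOps_le hl hC hD _ _).trans ?_
  have hsum : ∀ k : κ → ι, ((Finset.univ : Finset κ).toList.map fun i ↦ l (k i)).sum =
      energyWeight l k - 1 := fun k ↦ by
    rw [Finset.sum_map_toList, energyWeight, add_sub_cancel_left]
  simp only [hsum, Finset.length_toList, Finset.card_univ]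
  gcongr
  exact wsq_mul_sub_one_div_le (one_le_energyWeight hl) e

/-- The Aubin–Nitsche argument: `z` solves the dual problem with right-hand side `e`, and by
orthogonality `e` only sees its approximation error. -/
theorem StableApprox.wsq_one_le_of_orthogonal (h : StableApprox R l C D) (hl : 0 ≤ l)
    (hC : 1 ≤ C) (hD : 0 ≤ D) (e : (κ → ι) → ℝ)
    (horth : ∑ k, energyWeight l k * e k *
      dirOps R Finset.univ.toList (fun k ↦ e k / energyWeight l k) k = 0) :
    wsq 1 e ≤ (2 * C) ^ Fintype.card κ * D * wsq (energyWeight l) e := by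
  set z : (κ → ι) → ℝ := fun k ↦ e k / energyWeight l k with hz
  set y := dirOps R Finset.univ.toList z
  have hpos : ∀ k : κ → ι, 0 < energyWeight l k := fun k ↦
    one_pos.trans_le (one_le_energyWeight hl k)
  have hω : (0 : (κ → ι) → ℝ) ≤ energyWeight l := energyWeight_nonneg hl
  have hdual : wsq 1 e = ∑ k, energyWeight l k * e k * (z - y) k := by
    simp only [Pi.sub_apply, mul_sub, Finset.sum_sub_distrib, horth, sub_zero]
    refine Finset.sum_congr rfl fun k _ ↦ ?_
    have := (hpos k).ne'
    simp only [hz, Pi.one_apply]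
    field_simp
  have hcauchy : wsq 1 e ^ 2 ≤ wsq (energyWeight l) e * wsq (energyWeight l) (z - y) := by
    rw [hdual]
    exact Finset.sum_sq_le_sum_mul_sum_of_sq_le_mul _ (fun k _ ↦ mul_nonneg (hω k) (sq_nonneg _))
      (fun k _ ↦ mul_nonneg (hω k) (sq_nonneg _)) fun k _ ↦ le_of_eq (by ring)
  have hbound := hcauchy.trans (mul_le_mul_of_nonneg_left
    (h.wsq_sub_dirOps_univ_le hl hC hD e) (wsq_nonneg hω e))
  obtain he | he := (wsq_nonneg (zero_le_one : (0 : (κ → ι) → ℝ) ≤ 1) e).eq_or_lt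
  · rw [← he]
    have := wsq_nonneg hω e
    positivity
  · exact le_of_mul_le_mul_right (by linarith) he

end TensorCoefficients

section IntegrationOperator

open scoped RealInnerProductSpace

variable {H : Type*} [NormedAddCommGroup H] [InnerProductSpace ℝ H]
  {K : H →ₗ[ℝ] H} {one : H} {X : Submodule ℝ H} {δ : ℝ}

/-- The integration by parts rule of `K f = ∫₀ f` on `L²(0,1)`; the right-hand side is
`(K f)(1) (K g)(1)`. -/
def IsIntegrationOp (K : H →ₗ[ℝ] H) (one : H) : Prop :=
  ∀ f g, ⟪K f, g⟫ + ⟪f, K g⟫ = ⟪f, one⟫ * ⟪g, one⟫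

/-- Every `K f` is approximated by an element of `X` to within `δ ‖f‖`. -/
def ApproximatesRange (K : H →ₗ[ℝ] H) (X : Submodule ℝ H) (δ : ℝ) : Prop :=
  ∀ f, ∃ x ∈ X, ‖K f - x‖ ≤ δ * ‖f‖

lemma ApproximatesRange.mono (hX : ApproximatesRange K X δ) {Y : Submodule ℝ H} (hXY : X ≤ Y) :
    ApproximatesRange K Y δ := fun f ↦
  let ⟨x, hx, hfx⟩ := hX f
  ⟨x, hXY hx, hfx⟩

lemma le_of_sq_le_mul {a b : ℝ} (ha : 0 ≤ a) (hb : 0 ≤ b) (h : a ^ 2 ≤ b * a) : a ≤ b := by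
  obtain rfl | ha := ha.eq_or_lt
  · exact hb
  · exact le_of_mul_le_mul_right (by rwa [← sq]) ha

lemma ApproximatesRange.abs_inner_apply_le (hX : ApproximatesRange K X δ) (f : H) {r : H}
    (hr : ∀ x ∈ X, ⟪r, x⟫ = 0) : |⟪r, K f⟫| ≤ ‖r‖ * (δ * ‖f‖) := by
  obtain ⟨x, hx, hfx⟩ := hX f
  calc |⟪r, K f⟫| = |⟪r, K f - x⟫| := by rw [inner_sub_right, hr x hx, sub_zero]
    _ ≤ ‖r‖ * ‖K f - x‖ := abs_real_inner_le_norm _ _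
    _ ≤ ‖r‖ * (δ * ‖f‖) := by gcongr

/-- On functions orthogonal to `X ∋ 1` the operator `K` is skew-adjoint, which moves the
approximation property of `X` from the second factor of `⟪K r, K r⟫ = -⟪r, K (K r)⟫` to `r`. -/
lemma IsIntegrationOp.norm_apply_le (hK : IsIntegrationOp K one)
    (hX : ApproximatesRange K X δ) (hδ : 0 ≤ δ) (hone : one ∈ X) {r : H}
    (hr : ∀ x ∈ X, ⟪r, x⟫ = 0) : ‖K r‖ ≤ δ * ‖r‖ := by
  have hskew : ‖K r‖ ^ 2 = -⟪r, K (K r)⟫ := by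
    have := hK r (K r)
    rw [hr one hone, zero_mul] at this
    rw [← real_inner_self_eq_norm_sq]
    linarith
  refine le_of_sq_le_mul (norm_nonneg _) (by positivity) ?_
  calc ‖K r‖ ^ 2 ≤ |⟪r, K (K r)⟫| := hskew.trans_le (neg_le_abs _)
    _ ≤ ‖r‖ * (δ * ‖K r‖) := hX.abs_inner_apply_le _ hr
    _ = δ * ‖r‖ * ‖K r‖ := by ring

variable [X.HasOrthogonalProjection]

lemma IsIntegrationOp.norm_apply_sub_starProjection_le (hK : IsIntegrationOp K one)
    (hX : ApproximatesRange K X δ) (hδ : 0 ≤ δ) (hone : one ∈ X) (f : H) :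
    ‖K (f - X.starProjection f)‖ ≤ δ * ‖f‖ := by
  refine (hK.norm_apply_le hX hδ hone fun x ↦ X.starProjection_inner_eq_zero f x).trans ?_
  gcongr
  rw [← X.starProjection_orthogonal_val]
  exact Xᗮ.norm_starProjection_apply_le f

lemma ApproximatesRange.of_map_le (hX : ApproximatesRange K X δ) (hK : IsIntegrationOp K one)
    (hδ : 0 ≤ δ) (hone : one ∈ X) {Y : Submodule ℝ H} (hY : X.map K ≤ Y) :
    ApproximatesRange K Y δ := fun f ↦
  ⟨K (X.starProjection f), hY (Submodule.mem_map_of_mem (X.starProjection_apply_mem f)), by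
    rw [← map_sub]
    exact hK.norm_apply_sub_starProjection_le hX hδ hone f⟩

end IntegrationOperator

section RitzProjection

open scoped RealInnerProductSpace

/-- An abstract space of weakly differentiable functions on `(0,1)`: an element of `V` has a
class `incl` in `H = L²(0,1)`, a derivative `der` and a value `atZero` at `0`, and is recovered from
the latter two through the integration operator `K`. -/
structure H1Model {H : Type*} [NormedAddCommGroup H] [InnerProductSpace ℝ H] (K : H →ₗ[ℝ] H)
    (one : H) (V : Type*) [AddCommGroup V] [Module ℝ V] where
  /-- The class in `L²`. -/
  incl : V →ₗ[ℝ] H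
  /-- The weak derivative. -/
  der : V →ₗ[ℝ] H
  /-- The value at `0`. -/
  atZero : V →ₗ[ℝ] ℝ
  /-- The constant function `1`. -/
  const : V
  incl_injective : Function.Injective incl
  der_const : der const = 0
  atZero_const : atZero const = 1
  incl_eq : ∀ w, incl w = atZero w • one + K (der w)

namespace H1Model

variable {H V : Type*} [NormedAddCommGroup H] [InnerProductSpace ℝ H] [AddCommGroup V]
  [Module ℝ V] {K : H →ₗ[ℝ] H} {one : H}

lemma incl_const (S : H1Model K one V) : S.incl S.const = one := by
  rw [S.incl_eq, S.atZero_const, S.der_const, map_zero, one_smul, add_zero]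

variable {X : Submodule ℝ H} [X.HasOrthogonalProjection] {δ : ℝ}

/-- `w'` is the Ritz projection of `w`: the best approximation in the energy seminorm with
derivative in `X`, normalised at `0`. -/
structure IsRitz (S : H1Model K one V) (X : Submodule ℝ H) [X.HasOrthogonalProjection]
    (w w' : V) : Prop where
  der_eq : S.der w' = X.starProjection (S.der w)
  atZero_eq : S.atZero w' = S.atZero w

variable {S : H1Model K one V} {w w' : V}

lemma IsRitz.incl_sub (h : S.IsRitz X w w') : S.incl (w - w') = K (S.der (w - w')) := by
  rw [S.incl_eq, map_sub S.atZero, h.atZero_eq, sub_self, zero_smul, zero_add]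

lemma IsRitz.der_sub (h : S.IsRitz X w w') :
    S.der (w - w') = S.der w - X.starProjection (S.der w) := by
  rw [map_sub, h.der_eq]

lemma IsRitz.inner_der_sub (h : S.IsRitz X w w') : ∀ x ∈ X, ⟪S.der (w - w'), x⟫ = 0 := by
  rw [h.der_sub]
  exact X.starProjection_inner_eq_zero _

lemma IsRitz.norm_incl_sub_le (h : S.IsRitz X w w') (hK : IsIntegrationOp K one)
    (hX : ApproximatesRange K X δ) (hδ : 0 ≤ δ) (hone : one ∈ X) :
    ‖S.incl (w - w')‖ ≤ δ * ‖S.der w‖ := by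
  rw [h.incl_sub, h.der_sub]
  exact hK.norm_apply_sub_starProjection_le hX hδ hone _

/-- Here `g` plays the role of `-w''` with natural boundary conditions. -/
lemma IsRitz.norm_der_sub_le (h : S.IsRitz X w w') (hK : IsIntegrationOp K one)
    (hX : ApproximatesRange K X δ) (hδ : 0 ≤ δ) {g : H}
    (hg : ∀ v, ⟪S.der w, S.der v⟫ = ⟪g, S.incl v⟫) :
    ‖S.der (w - w')‖ ≤ δ * ‖g‖ := by
  set r := S.der (w - w')
  have hg_one : ⟪g, one⟫ = 0 := by
    rw [← S.incl_const, ← hg, S.der_const, inner_zero_right]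
  have hproj : ⟪X.starProjection (S.der w), r⟫ = 0 := by
    rw [real_inner_comm]
    exact h.inner_der_sub _ (X.starProjection_apply_mem _)
  have henergy : ‖r‖ ^ 2 = -⟪r, K g⟫ :=
    calc ‖r‖ ^ 2 = ⟪S.der w, r⟫ := by
          rw [← real_inner_self_eq_norm_sq, ← sub_zero ⟪S.der w, r⟫, ← hproj, ← inner_sub_left,
            ← h.der_sub]
      _ = ⟪g, K r⟫ := by rw [hg, h.incl_sub]
      _ = -⟪r, K g⟫ := by
          have := hK g r
          rw [hg_one, zero_mul, real_inner_comm] at this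
          linarith
  refine le_of_sq_le_mul (norm_nonneg _) (by positivity) ?_
  calc ‖r‖ ^ 2 ≤ |⟪r, K g⟫| := henergy.trans_le (neg_le_abs _)
    _ ≤ ‖r‖ * (δ * ‖g‖) := hX.abs_inner_apply_le _ h.inner_der_sub
    _ = δ * ‖g‖ * ‖r‖ := by ring

lemma exists_der_eq_atZero_eq (S : H1Model K one V) {V' : Submodule ℝ V} (hconst : S.const ∈ V')
    {x : H} (hx : x ∈ V'.map S.der) (c : ℝ) : ∃ w ∈ V', S.der w = x ∧ S.atZero w = c := by
  obtain ⟨w, hw, rfl⟩ := hx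
  refine ⟨w + (c - S.atZero w) • S.const, V'.add_mem hw (V'.smul_mem _ hconst), ?_, ?_⟩
  · rw [map_add, map_smul, S.der_const, smul_zero, add_zero]
  · rw [map_add, map_smul, S.atZero_const, smul_eq_mul, mul_one, add_sub_cancel]

lemma exists_linearMap_isRitz [Module.Free ℝ V] (S : H1Model K one V) {V' : Submodule ℝ V}
    [(V'.map S.der).HasOrthogonalProjection] (hconst : S.const ∈ V') :
    ∃ P : V →ₗ[ℝ] V, ∀ w, P w ∈ V' ∧ S.IsRitz (V'.map S.der) w (P w) := by
  let φ := Module.Free.chooseBasis ℝ V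
  choose ρ hρ_mem hρ_der hρ_atZero using fun b ↦ S.exists_der_eq_atZero_eq hconst
    ((V'.map S.der).starProjection_apply_mem (S.der (φ b))) (S.atZero (φ b))
  refine ⟨φ.constr ℝ ρ, fun w ↦ ⟨?_, ?_, ?_⟩⟩
  · rw [Module.Basis.constr_apply]
    exact V'.finsuppSum_mem _ _ _ fun b _ ↦ V'.smul_mem _ (hρ_mem b)
  · refine DFunLike.congr_fun (φ.ext fun b ↦ ?_ : S.der ∘ₗ φ.constr ℝ ρ =
      (V'.map S.der).starProjection.toLinearMap ∘ₗ S.der) w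
    simpa using hρ_der b
  · refine DFunLike.congr_fun (φ.ext fun b ↦ ?_ : S.atZero ∘ₗ φ.constr ℝ ρ = S.atZero) w
    simpa using hρ_atZero b

end H1Model

end RitzProjection

section SimultaneousDiagonalization

open scoped RealInnerProductSpace Matrix

variable {H V : Type*} [NormedAddCommGroup H] [InnerProductSpace ℝ H] [AddCommGroup V]
  [Module ℝ V] {ι : Type*} [DecidableEq ι]

/-- The basis `φ` diagonalises the quadratic form `‖T ·‖²`, with diagonal entries `l`. -/
def Diagonalizes (φ : Module.Basis ι ℝ V) (T : V →ₗ[ℝ] H) (l : ι → ℝ) : Prop :=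
  ∀ a b, ⟪T (φ a), T (φ b)⟫ = if a = b then l a else 0

variable {φ : Module.Basis ι ℝ V} {T : V →ₗ[ℝ] H} {l : ι → ℝ}

lemma Diagonalizes.nonneg (h : Diagonalizes φ T l) : 0 ≤ l := fun a ↦
  (real_inner_self_nonneg (x := T (φ a))).trans_eq (by rw [h a a, if_pos rfl])

lemma Diagonalizes.inner_eq [Fintype ι] (h : Diagonalizes φ T l) (v w : V) :
    ⟪T v, T w⟫ = ∑ a, l a * φ.repr v a * φ.repr w a := by
  conv_lhs => rw [← φ.sum_repr v, ← φ.sum_repr w]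
  simp only [map_sum, map_smul, sum_inner, inner_sum, real_inner_smul_left, real_inner_smul_right,
    h _ _, mul_ite, mul_zero, Finset.sum_ite_eq', Finset.mem_univ, if_true]
  exact Finset.sum_congr rfl fun a _ ↦ by ring

lemma Diagonalizes.norm_sq_eq [Fintype ι] (h : Diagonalizes φ T l) (w : V) :
    ‖T w‖ ^ 2 = wsq l (φ.repr w) := by
  rw [← real_inner_self_eq_norm_sq, h.inner_eq]
  exact Finset.sum_congr rfl fun a _ ↦ by ring

lemma exists_basis_diagonalizes [FiniteDimensional ℝ V] {incl : V →ₗ[ℝ] H}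
    (hincl : Function.Injective incl) (T : V →ₗ[ℝ] H) :
    ∃ (n : ℕ) (φ : Module.Basis (Fin n) ℝ V) (l : Fin n → ℝ),
      Diagonalizes φ incl 1 ∧ Diagonalizes φ T l := by
  let E := LinearEquiv.ofInjective incl hincl
  let T₁ : LinearMap.range incl →ₗ[ℝ] LinearMap.range T := T.rangeRestrict ∘ₗ E.symm.toLinearMap
  let B := LinearMap.adjoint T₁ ∘ₗ T₁
  have hB_inner : ∀ x y, ⟪B x, y⟫ = ⟪T (E.symm x), T (E.symm y)⟫ := fun x y ↦
    LinearMap.adjoint_inner_left T₁ y (T₁ x)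
  have hB : B.IsSymmetric := fun x y ↦ by
    rw [hB_inner, real_inner_comm (B y), hB_inner, real_inner_comm]
  have hE : ∀ x, incl (E.symm x) = x := fun x ↦ congrArg Subtype.val (E.apply_symm_apply x)
  let b := hB.eigenvectorBasis rfl
  have hb : ∀ a c, ⟪(b a : H), b c⟫ = if a = c then (1 : ℝ) else 0 :=
    orthonormal_iff_ite.1 b.orthonormal
  refine ⟨_, b.toBasis.map E.symm, hB.eigenvalues rfl, fun a c ↦ ?_, fun a c ↦ ?_⟩
  · simpa [hE] using hb a c
  · have hac : ⟪B (b a), b c⟫ = hB.eigenvalues rfl a * ⟪b a, b c⟫ := by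
      rw [hB.apply_eigenvectorBasis rfl a, real_inner_smul_left]
      rfl
    rw [hB_inner, Submodule.coe_inner, hb] at hac
    simpa using hac

end SimultaneousDiagonalization

section OneDimensional

open scoped RealInnerProductSpace Matrix

variable {H V : Type*} [NormedAddCommGroup H] [InnerProductSpace ℝ H] [AddCommGroup V]
  [Module ℝ V] {K : H →ₗ[ℝ] H} {one : H} {S : H1Model K one V}
  {ι : Type*} [Fintype ι] [DecidableEq ι] {φ : Module.Basis ι ℝ V} {l : ι → ℝ}
  {X : Submodule ℝ H} [X.HasOrthogonalProjection] {δ : ℝ}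

lemma H1Model.IsRitz.wsq_one_repr_sub_le {w w' : V} (h : S.IsRitz X w w')
    (hincl : Diagonalizes φ S.incl 1) (hder : Diagonalizes φ S.der l)
    (hK : IsIntegrationOp K one) (hX : ApproximatesRange K X δ) (hδ : 0 ≤ δ) (hone : one ∈ X) :
    wsq 1 (φ.repr (w - w')) ≤ δ ^ 2 * wsq l (φ.repr w) := by
  rw [← hincl.norm_sq_eq, ← hder.norm_sq_eq, ← mul_pow]
  exact pow_le_pow_left₀ (norm_nonneg _) (h.norm_incl_sub_le hK hX hδ hone) 2

lemma H1Model.IsRitz.wsq_repr_sub_le {w w' : V} (h : S.IsRitz X w w')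
    (hincl : Diagonalizes φ S.incl 1) (hder : Diagonalizes φ S.der l)
    (hK : IsIntegrationOp K one) (hX : ApproximatesRange K X δ) (hδ : 0 ≤ δ) :
    wsq l (φ.repr (w - w')) ≤ δ ^ 2 * wsq (l ^ 2) (φ.repr w) := by
  set g : V := φ.equivFun.symm fun a ↦ l a * φ.repr w a with hg_def
  have hg_repr : ∀ a, φ.repr g a = l a * φ.repr w a := fun a ↦ by
    rw [← φ.equivFun_apply, hg_def, LinearEquiv.apply_symm_apply]
  have hg : ∀ v, ⟪S.der w, S.der v⟫ = ⟪S.incl g, S.incl v⟫ := fun v ↦ by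
    simp only [hincl.inner_eq, hder.inner_eq, hg_repr, Pi.one_apply, one_mul]
  have hg_norm : ‖S.incl g‖ ^ 2 = wsq (l ^ 2) (φ.repr w) := by
    rw [hincl.norm_sq_eq]
    simp only [wsq, hg_repr, Pi.one_apply, Pi.pow_apply, one_mul, mul_pow]
  rw [← hder.norm_sq_eq, ← hg_norm, ← mul_pow]
  exact pow_le_pow_left₀ (norm_nonneg _) (h.norm_der_sub_le hK hX hδ hg) 2

/-- The Ritz projection alone is not stable in `L²`; composing it with the spectral cutoff is what
makes all constants independent of the space. -/
theorem H1Model.exists_stableApprox [FiniteDimensional ℝ V] (S : H1Model K one V)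
    (hK : IsIntegrationOp K one) {V' : Submodule ℝ V} (hconst : S.const ∈ V')
    (hX : ApproximatesRange K (V'.map S.der) δ) (hδ : 0 ≤ δ) (hone : one ∈ V'.map S.der) :
    ∃ (n : ℕ) (φ : Module.Basis (Fin n) ℝ V) (l : Fin n → ℝ) (R : Matrix (Fin n) (Fin n) ℝ),
      Diagonalizes φ S.incl 1 ∧ Diagonalizes φ S.der l ∧ (∀ b, ∑ a, R a b • φ a ∈ V') ∧
      StableApprox R l 4 (2 * δ ^ 2) := by
  obtain ⟨n, φ, l, hincl, hder⟩ := exists_basis_diagonalizes S.incl_injective S.der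
  obtain ⟨P, hP⟩ := S.exists_linearMap_isRitz hconst
  let A := LinearMap.toMatrix φ φ P
  have hA : ∀ x : Fin n → ℝ, ∃ w, x = φ.repr w ∧ x - A *ᵥ x = φ.repr (w - P w) := fun x ↦
    ⟨φ.equivFun.symm x, by
      rw [map_sub, Finsupp.coe_sub, ← LinearMap.toMatrix_mulVec_repr φ φ P, ← φ.equivFun_apply,
        LinearEquiv.apply_symm_apply]
      exact ⟨rfl, rfl⟩⟩
  refine ⟨n, φ, l, A * spectralCutoff l δ, hincl, hder, fun b ↦ ?_,
    .mul_spectralCutoff hder.nonneg (fun x ↦ ?_) fun x ↦ ?_⟩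
  · have hcol : ∑ a, (A * spectralCutoff l δ) a b • φ a =
        (if δ ^ 2 * l b ≤ 1 then (1 : ℝ) else 0) • P (φ b) := by
      simp only [spectralCutoff, Matrix.mul_diagonal, A, LinearMap.toMatrix_apply, mul_comm,
        mul_smul, ← Finset.smul_sum, φ.sum_repr]
    rw [hcol]
    exact V'.smul_mem _ (hP _).1
  · obtain ⟨w, hw, hw'⟩ := hA x
    rw [hw', hw]
    exact (hP w).2.wsq_one_repr_sub_le hincl hder hK hX hδ hone
  · obtain ⟨w, hw, hw'⟩ := hA x
    rw [hw', hw]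
    exact (hP w).2.wsq_repr_sub_le hincl hder hK hX hδ

end OneDimensional

section Primitive

open intervalIntegral

variable {f g : ℝ → ℝ} {a b : ℝ}

lemma integral_mul_primitive_add_primitive_mul (hf : IntervalIntegrable f volume a b)
    (hg : IntervalIntegrable g volume a b) :
    ∫ x in a..b, (f x * (∫ t in a..x, g t) + (∫ t in a..x, f t) * g x) =
      (∫ x in a..b, f x) * ∫ x in a..b, g x := by
  have hparts := (hf.absolutelyContinuousOnInterval_intervalIntegral left_mem_uIcc)
    |>.integral_deriv_mul_eq_sub (hg.absolutelyContinuousOnInterval_intervalIntegral left_mem_uIcc)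
  rw [integral_same, zero_mul, sub_zero] at hparts
  rw [← hparts]
  refine integral_congr_ae ?_
  filter_upwards [hf.ae_hasDerivAt_integral, hg.ae_hasDerivAt_integral] with x hfx hgx hx
  rw [(hfx (uIoc_subset_uIcc hx) a left_mem_uIcc).deriv,
    (hgx (uIoc_subset_uIcc hx) a left_mem_uIcc).deriv]

lemma sq_integral_le_mul_integral_sq (hab : a ≤ b) (hf : IntervalIntegrable f volume a b)
    (hf2 : IntervalIntegrable (fun x ↦ f x ^ 2) volume a b) :
    (∫ x in a..b, f x) ^ 2 ≤ (b - a) * ∫ x in a..b, f x ^ 2 := by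
  obtain rfl | hlt := hab.eq_or_lt
  · simp
  set I := ∫ x in a..b, f x
  have hlin : IntervalIntegrable (fun x ↦ 2 * (b - a) * I * f x) volume a b := hf.const_mul _
  have hsq : IntervalIntegrable (fun x ↦ (b - a) ^ 2 * f x ^ 2) volume a b := hf2.const_mul _
  have hdev : 0 ≤ (b - a) * ((b - a) * (∫ x in a..b, f x ^ 2) - I ^ 2) :=
    calc 0 ≤ ∫ x in a..b, ((b - a) * f x - I) ^ 2 :=
          integral_nonneg hab fun x _ ↦ sq_nonneg _
      _ = ∫ x in a..b, ((b - a) ^ 2 * f x ^ 2 - 2 * (b - a) * I * f x + I ^ 2) := by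
          congr with x
          ring
      _ = (b - a) * ((b - a) * (∫ x in a..b, f x ^ 2) - I ^ 2) := by
          rw [integral_add (hsq.sub hlin) intervalIntegrable_const, integral_sub hsq hlin,
            intervalIntegral.integral_const_mul, intervalIntegral.integral_const_mul,
            intervalIntegral.integral_const, smul_eq_mul]
          ring
  exact sub_nonneg.1 (nonneg_of_mul_nonneg_right hdev (sub_pos.2 hlt))

lemma intervalIntegrable_sq_primitive (hf : IntervalIntegrable f volume a b) :
    IntervalIntegrable (fun x ↦ (∫ t in a..x, f t) ^ 2) volume a b :=
  ((hf.absolutelyContinuousOnInterval_intervalIntegral left_mem_uIcc).continuousOn.pow 2)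
    |>.intervalIntegrable

lemma integral_sq_primitive_le (hab : a ≤ b) (hf : IntervalIntegrable f volume a b)
    (hf2 : IntervalIntegrable (fun x ↦ f x ^ 2) volume a b) :
    ∫ x in a..b, (∫ t in a..x, f t) ^ 2 ≤ (b - a) ^ 2 * ∫ x in a..b, f x ^ 2 := by
  have hpointwise : ∀ x ∈ Icc a b, (∫ t in a..x, f t) ^ 2 ≤ (b - a) * ∫ x in a..b, f x ^ 2 := by
    intro x hx
    have hsub : uIcc a x ⊆ uIcc a b := uIcc_subset_uIcc_left (Icc_subset_uIcc hx)
    calc (∫ t in a..x, f t) ^ 2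
        ≤ (x - a) * ∫ t in a..x, f t ^ 2 :=
          sq_integral_le_mul_integral_sq hx.1 (hf.mono_set hsub) (hf2.mono_set hsub)
      _ ≤ (b - a) * ∫ t in a..b, f t ^ 2 := by
          gcongr
          · exact integral_nonneg hx.1 fun t _ ↦ sq_nonneg _
          · exact hx.2
          · exact integral_mono_interval le_rfl hx.1 hx.2
              (.of_forall fun t ↦ sq_nonneg _) hf2
  calc ∫ x in a..b, (∫ t in a..x, f t) ^ 2
      ≤ ∫ _ in a..b, (b - a) * ∫ t in a..b, f t ^ 2 :=
        integral_mono_on hab (intervalIntegrable_sq_primitive hf) intervalIntegrable_const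
          hpointwise
    _ = (b - a) ^ 2 * ∫ x in a..b, f x ^ 2 := by
        rw [intervalIntegral.integral_const, smul_eq_mul]
        ring

lemma Icc_mesh_subset {M k : ℕ} (hk : k < M) : Icc ((k : ℝ) / M) ((k + 1 : ℕ) / M) ⊆ Icc 0 1 := by
  refine Icc_subset_Icc (by positivity) ((div_le_one₀ ?_).2 ?_)
  · exact_mod_cast k.zero_le.trans_lt hk
  · exact_mod_cast hk

lemma integral_sq_le_of_eq_mesh_primitive {M : ℕ} [NeZero M]
    (hf : IntervalIntegrable f volume 0 1) (hf2 : IntervalIntegrable (fun x ↦ f x ^ 2) volume 0 1)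
    (hg : ∀ k < M, ∀ x ∈ Ioo ((k : ℝ) / M) ((k + 1 : ℕ) / M), g x = ∫ t in (k : ℝ) / M..x, f t) :
    ∫ x in (0 : ℝ)..1, g x ^ 2 ≤ (1 / (M : ℝ)) ^ 2 * ∫ x in (0 : ℝ)..1, f x ^ 2 := by
  have hM : (M : ℝ) ≠ 0 := NeZero.ne _
  have hle (k : ℕ) : (k : ℝ) / M ≤ (k + 1 : ℕ) / M := by gcongr; exact k.le_succ
  have hsub {k : ℕ} (hk : k < M) : uIcc ((k : ℝ) / M) ((k + 1 : ℕ) / M) ⊆ uIcc 0 1 := by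
    rw [uIcc_of_le (hle k), uIcc_of_le zero_le_one]
    exact Icc_mesh_subset hk
  have hg_ae {k : ℕ} (hk : k < M) : EqOn (fun x ↦ (∫ t in (k : ℝ) / M..x, f t) ^ 2)
      (fun x ↦ g x ^ 2) (uIoo ((k : ℝ) / M) ((k + 1 : ℕ) / M)) := by
    rw [uIoo_of_le (hle k)]
    intro x hx
    simp only [hg k hk x hx]
  have hsum {F : ℝ → ℝ}
      (hF : ∀ k < M, IntervalIntegrable F volume ((k : ℝ) / M) ((k + 1 : ℕ) / M)) :
      ∑ k ∈ Finset.range M, ∫ x in (k : ℝ) / M..(k + 1 : ℕ) / M, F x = ∫ x in (0 : ℝ)..1, F x := by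
    rw [sum_integral_adjacent_intervals (a := fun k : ℕ ↦ (k : ℝ) / M) hF, Nat.cast_zero, zero_div,
      div_self hM]
  rw [← hsum fun k hk ↦ hf2.mono_set (hsub hk), ← hsum fun k hk ↦
    (intervalIntegrable_sq_primitive (hf.mono_set (hsub hk))).congr_uIoo (hg_ae hk),
    Finset.mul_sum]
  refine Finset.sum_le_sum fun k hk ↦ ?_
  have hk := Finset.mem_range.1 hk
  have hlength : ((k + 1 : ℕ) : ℝ) / M - k / M = 1 / M := by push_cast; ring
  rw [← integral_congr_uIoo (hg_ae hk), ← hlength]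
  exact integral_sq_primitive_le (hle k) (hf.mono_set (hsub hk)) (hf2.mono_set (hsub hk))

end Primitive

section UnitInterval

open scoped RealInnerProductSpace

/-- The Hilbert space `L²(0,1)`. -/
abbrev UnitL2 : Type := Lp ℝ 2 (volume.restrict (Ioo (0 : ℝ) 1))

lemma intervalIntegrable_of_integrable_Ioo {f : ℝ → ℝ}
    (hf : Integrable f (volume.restrict (Ioo (0 : ℝ) 1))) : IntervalIntegrable f volume 0 1 := by
  rwa [intervalIntegrable_iff_integrableOn_Ioo_of_le zero_le_one]

lemma setIntegral_Ioo_eq_intervalIntegral (f : ℝ → ℝ) :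
    ∫ x in Ioo (0 : ℝ) 1, f x = ∫ x in (0 : ℝ)..1, f x := by
  rw [intervalIntegral.integral_of_le zero_le_one, integral_Ioc_eq_integral_Ioo]

lemma UnitL2.intervalIntegrable (f : UnitL2) : IntervalIntegrable f volume 0 1 :=
  intervalIntegrable_of_integrable_Ioo ((Lp.memLp f).integrable one_le_two)

lemma UnitL2.intervalIntegrable_sq (f : UnitL2) :
    IntervalIntegrable (fun x ↦ f x ^ 2) volume 0 1 :=
  intervalIntegrable_of_integrable_Ioo (Lp.memLp f).integrable_sq

lemma UnitL2.inner_eq (f g : UnitL2) : ⟪f, g⟫ = ∫ x in (0 : ℝ)..1, f x * g x := by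
  rw [L2.inner_def, setIntegral_Ioo_eq_intervalIntegral]
  simp only [RCLike.inner_apply, conj_trivial, mul_comm]

lemma UnitL2.norm_sq_eq (f : UnitL2) : ‖f‖ ^ 2 = ∫ x in (0 : ℝ)..1, f x ^ 2 := by
  rw [← real_inner_self_eq_norm_sq, f.inner_eq]
  simp only [sq]

lemma primitive_congr_ae {f g : ℝ → ℝ} (h : f =ᵐ[volume.restrict (Ioo (0 : ℝ) 1)] g) {x : ℝ}
    (hx : x ∈ Icc 0 1) : ∫ t in (0 : ℝ)..x, f t = ∫ t in (0 : ℝ)..x, g t := by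
  rw [intervalIntegral.integral_of_le hx.1, intervalIntegral.integral_of_le hx.1,
    integral_Ioc_eq_integral_Ioo, integral_Ioc_eq_integral_Ioo]
  exact integral_congr_ae (ae_restrict_of_ae_restrict_of_subset (Ioo_subset_Ioo_right hx.2) h)

lemma memLp_primitive {f : ℝ → ℝ} (hf : IntervalIntegrable f volume 0 1) :
    MemLp (fun x ↦ ∫ t in (0 : ℝ)..x, f t) 2 (volume.restrict (Ioo (0 : ℝ) 1)) := by
  have hcont := (hf.absolutelyContinuousOnInterval_intervalIntegral left_mem_uIcc).continuousOn
  rw [uIcc_of_le zero_le_one] at hcont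
  obtain ⟨B, hB⟩ := isCompact_Icc.exists_bound_of_continuousOn hcont
  refine MemLp.of_bound ((hcont.mono Ioo_subset_Icc_self).aestronglyMeasurable measurableSet_Ioo) B
    ?_
  exact ae_restrict_of_forall_mem measurableSet_Ioo fun x hx ↦ hB x (Ioo_subset_Icc_self hx)

/-- The integration operator `f ↦ ∫₀ˣ f` of `L²(0,1)`. -/
def integrationOp : UnitL2 →ₗ[ℝ] UnitL2 where
  toFun f := (memLp_primitive f.intervalIntegrable).toLp _
  map_add' f g := by
    rw [← MemLp.toLp_add]
    refine MemLp.toLp_congr _ _ (ae_restrict_of_forall_mem measurableSet_Ioo fun x hx ↦ ?_)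
    have hx := Ioo_subset_Icc_self hx
    have hsub : uIcc 0 x ⊆ uIcc 0 1 := uIcc_subset_uIcc_left (Icc_subset_uIcc hx)
    exact (primitive_congr_ae (Lp.coeFn_add f g) hx).trans <|
      intervalIntegral.integral_add (f.intervalIntegrable.mono_set hsub)
        (g.intervalIntegrable.mono_set hsub)
  map_smul' c f := by
    rw [RingHom.id_apply, ← MemLp.toLp_const_smul]
    refine MemLp.toLp_congr _ _ (ae_restrict_of_forall_mem measurableSet_Ioo fun x hx ↦ ?_)
    exact (primitive_congr_ae (Lp.coeFn_smul c f) (Ioo_subset_Icc_self hx)).trans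
      (intervalIntegral.integral_smul c f)

lemma integrationOp_ae_eq (f : UnitL2) :
    integrationOp f =ᵐ[volume.restrict (Ioo (0 : ℝ) 1)] fun x ↦ ∫ t in (0 : ℝ)..x, f t :=
  MemLp.coeFn_toLp (memLp_primitive f.intervalIntegrable)

/-- The constant function `1` in `L²(0,1)`. -/
def unitOne : UnitL2 := Lp.const 2 _ 1

lemma unitOne_ae_eq : unitOne =ᵐ[volume.restrict (Ioo (0 : ℝ) 1)] fun _ ↦ 1 :=
  Lp.coeFn_const _ _ _

lemma inner_unitOne (f : UnitL2) : ⟪f, unitOne⟫ = ∫ x in (0 : ℝ)..1, f x := by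
  rw [UnitL2.inner_eq, ← setIntegral_Ioo_eq_intervalIntegral,
    ← setIntegral_Ioo_eq_intervalIntegral]
  refine integral_congr_ae ?_
  filter_upwards [unitOne_ae_eq] with x hx
  rw [hx, mul_one]

lemma inner_integrationOp (f g : UnitL2) :
    ⟪f, integrationOp g⟫ = ∫ x in (0 : ℝ)..1, f x * ∫ t in (0 : ℝ)..x, g t := by
  rw [UnitL2.inner_eq, ← setIntegral_Ioo_eq_intervalIntegral,
    ← setIntegral_Ioo_eq_intervalIntegral]
  refine integral_congr_ae ?_
  filter_upwards [integrationOp_ae_eq g] with x hx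
  rw [hx]

lemma intervalIntegrable_mul_primitive (f g : UnitL2) :
    IntervalIntegrable (fun x ↦ f x * ∫ t in (0 : ℝ)..x, g t) volume 0 1 :=
  intervalIntegrable_of_integrable_Ioo
    ((Lp.memLp f).integrable_mul (memLp_primitive g.intervalIntegrable))

lemma isIntegrationOp_integrationOp : IsIntegrationOp integrationOp unitOne := by
  intro f g
  rw [inner_unitOne, inner_unitOne, real_inner_comm, inner_integrationOp, inner_integrationOp,
    ← integral_mul_primitive_add_primitive_mul f.intervalIntegrable g.intervalIntegrable,
    add_comm, ← intervalIntegral.integral_add (intervalIntegrable_mul_primitive f g)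
      (intervalIntegrable_mul_primitive g f)]
  simp only [mul_comm]

end UnitInterval

section Pieces

variable {M j : ℕ} {x : ℝ}

lemma mem_pieceSet_iff (hj : j < M) : x ∈ pieceSet M j ↔
    (j = 0 ∨ (j : ℝ) / M ≤ x) ∧ (j + 1 = M ∨ x ≤ ((j : ℝ) + 1) / M) := by
  have hlast : j = M - 1 ↔ j + 1 = M := by omega
  simp only [pieceSet, hlast, mem_union]
  by_cases h0 : j = 0 <;> by_cases h1 : j + 1 = M <;> subst_vars
  · simpa using (le_total x 0).imp_left zero_le_one.trans'
  · simp [Nat.zero_add _ ▸ h1]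
  · have hmesh : (j : ℝ) / ((j + 1 : ℕ) : ℝ) = (((j + 1 : ℕ) : ℝ) - 1) / ((j + 1 : ℕ) : ℝ) := by
      push_cast
      ring
    simp only [h0, if_false, if_true, false_or, true_or, and_true, mem_Icc, mem_Ici, ← hmesh]
    tauto
  · simp [h0, h1]

lemma isClosed_pieceSet (M j : ℕ) : IsClosed (pieceSet M j) := by
  unfold pieceSet
  split_ifs
  · exact isClosed_Iic.union isClosed_Ici
  · exact isClosed_Iic.union isClosed_empty
  · exact isClosed_Icc.union isClosed_Ici
  · exact isClosed_Icc.union isClosed_empty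

lemma ordConnected_pieceSet (hj : j < M) : (pieceSet M j).OrdConnected := by
  refine ⟨fun x hx y hy z hz ↦ ?_⟩
  rw [mem_pieceSet_iff hj] at hx hy ⊢
  exact ⟨hx.1.imp_right hz.1.trans', hy.2.imp_right hz.2.trans⟩

lemma Icc_subset_pieceSet (hj : j < M) :
    Icc ((j : ℝ) / M) ((j + 1 : ℕ) / M) ⊆ pieceSet M j := fun _ hx ↦
  (mem_pieceSet_iff hj).2 ⟨.inr hx.1, .inr (Nat.cast_add_one (R := ℝ) j ▸ hx.2)⟩

lemma node_mem_pieceSet (hj : j < M) : (j : ℝ) / M ∈ pieceSet M j :=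
  Icc_subset_pieceSet hj (left_mem_Icc.2 (by gcongr; exact j.le_succ))

lemma finite_frontier_pieceSet (M j : ℕ) : (frontier (pieceSet M j)).Finite := by
  refine Finite.subset ?_ ((frontier_union_subset _ _).trans
    (union_subset_union inter_subset_left inter_subset_right))
  refine Finite.union ?_ ?_ <;> split_ifs
  · simp
  · rw [isClosed_Icc.frontier_eq, interior_Icc]
    rw [Icc_sdiff_Ioo_same (by gcongr; exact (lt_add_one _).le)]
    exact toFinite _
  · simp
  · simp

/-- The index of a piece containing `x`. -/
def pieceIndex (M : ℕ) (x : ℝ) : ℕ := min ⌊x * M⌋₊ (M - 1)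

lemma pieceIndex_lt [NeZero M] : pieceIndex M x < M :=
  (min_le_right _ _).trans_lt (Nat.pred_lt (NeZero.ne M))

lemma mem_pieceSet_pieceIndex [NeZero M] : x ∈ pieceSet M (pieceIndex M x) := by
  have hM : (0 : ℝ) < M := Nat.cast_pos.2 (NeZero.pos M)
  rw [mem_pieceSet_iff pieceIndex_lt, div_le_iff₀ hM, le_div_iff₀ hM]
  refine ⟨or_iff_not_imp_left.2 fun h0 ↦ ?_, or_iff_not_imp_left.2 fun h1 ↦ ?_⟩
  · have hpos : 0 < ⌊x * M⌋₊ := (Nat.pos_of_ne_zero h0).trans_le (min_le_left _ _)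
    calc (pieceIndex M x : ℝ) ≤ ⌊x * M⌋₊ := Nat.cast_le.2 (min_le_left _ _)
      _ ≤ x * M := Nat.floor_le (Nat.pos_of_floor_pos hpos).le
  · have hfloor : pieceIndex M x = ⌊x * M⌋₊ := by
      have := NeZero.pos M
      unfold pieceIndex at h1 ⊢
      omega
    rw [hfloor]
    exact (Nat.lt_floor_add_one _).le

lemma pieceIndex_eq_of_mem_interior (hj : j < M) (hx : x ∈ interior (pieceSet M j)) :
    pieceIndex M x = j := by
  have hM : (0 : ℝ) < M := Nat.cast_pos.2 (j.zero_le.trans_lt hj)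
  have hlower : j ≤ ⌊x * M⌋₊ := by
    obtain rfl | h := ((mem_pieceSet_iff hj).1 (interior_subset hx)).1
    · exact zero_le
    · exact Nat.le_floor ((div_le_iff₀ hM).1 h)
  have hupper : j + 1 = M ∨ ⌊x * M⌋₊ < j + 1 := by
    refine or_iff_not_imp_left.2 fun h1 ↦ (Nat.floor_lt' j.succ_ne_zero).2 ?_
    have hsub : pieceSet M j ⊆ Iic (((j : ℝ) + 1) / M) := fun y hy ↦
      ((mem_pieceSet_iff hj).1 hy).2.resolve_left h1
    have hlt := interior_mono hsub hx
    rw [interior_Iic, mem_Iio, lt_div_iff₀ hM] at hlt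
    exact_mod_cast hlt
  unfold pieceIndex
  omega

/-- The points where a piecewise polynomial need not be smooth. -/
def breakpoints (M : ℕ) : Set ℝ := ⋃ j : Fin M, frontier (pieceSet M j)

lemma countable_breakpoints (M : ℕ) : (breakpoints M).Countable :=
  (finite_iUnion fun j : Fin M ↦ finite_frontier_pieceSet M j).countable

lemma mem_interior_pieceSet (hj : j < M) (hx : x ∈ pieceSet M j) (hx' : x ∉ breakpoints M) :
    x ∈ interior (pieceSet M j) := by
  by_contra h
  exact hx' (mem_iUnion.2 ⟨⟨j, hj⟩, (isClosed_pieceSet M j).frontier_eq ▸ ⟨hx, h⟩⟩)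

lemma pieceSet_subset_of_dvd {N : ℕ} (hMN : M ∣ N) (hj : j < N) :
    pieceSet N j ⊆ pieceSet M (j / (N / M)) := by
  obtain ⟨k, rfl⟩ := hMN
  have hM : 0 < M := Nat.pos_of_mul_pos_right (j.zero_le.trans_lt hj)
  have hk : 0 < k := Nat.pos_of_mul_pos_left (j.zero_le.trans_lt hj)
  rw [Nat.mul_div_cancel_left _ hM]
  have hi : j / k < M := Nat.div_lt_of_lt_mul (mul_comm M k ▸ hj)
  have hlower : j / k * k ≤ j := Nat.div_mul_le_self j k
  have hupper : j + 1 ≤ (j / k + 1) * k := Nat.lt_mul_of_div_lt (Nat.lt_succ_self _) hk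
  intro x hx
  rw [mem_pieceSet_iff hj] at hx
  rw [mem_pieceSet_iff hi]
  have hk' : (0 : ℝ) < k := Nat.cast_pos.2 hk
  refine ⟨hx.1.imp (fun h ↦ by simp [h]) fun h ↦ le_trans ?_ h,
    hx.2.imp (fun h ↦ ?_) fun h ↦ h.trans ?_⟩
  · rw [← mul_div_mul_right _ _ hk'.ne']
    push_cast
    gcongr
    exact_mod_cast hlower
  · exact le_antisymm hi (Nat.le_of_mul_le_mul_right (h ▸ hupper) hk)
  · rw [← mul_div_mul_right _ (M : ℝ) hk'.ne']
    push_cast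
    gcongr
    exact_mod_cast hupper

end Pieces

section PiecewisePolynomials

variable {M q r : ℕ} {s t : ℝ → ℝ}

/-- `s` is a polynomial of degree at most `q` in the interior of each piece of the mesh; neither its
values at the breakpoints nor its smoothness there are restricted. -/
def IsPiecewisePoly (M q : ℕ) (s : ℝ → ℝ) : Prop :=
  ∀ j < M, ∃ P : Polynomial ℝ, P.natDegree ≤ q ∧ EqOn s (P.eval ·) (interior (pieceSet M j))

namespace IsPiecewisePoly

lemma mul (hs : IsPiecewisePoly M q s) (ht : IsPiecewisePoly M r t) :
    IsPiecewisePoly M (q + r) (s * t) := by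
  intro j hj
  obtain ⟨P, hP, hsP⟩ := hs j hj
  obtain ⟨Q, hQ, htQ⟩ := ht j hj
  refine ⟨P * Q, Polynomial.natDegree_mul_le.trans (add_le_add hP hQ), fun x hx ↦ ?_⟩
  simp only [Pi.mul_apply, Polynomial.eval_mul, hsP hx, htQ hx]

lemma exists_hasDerivAt (hs : IsPiecewisePoly M q s) {j : ℕ} (hj : j < M) :
    ∃ P : Polynomial ℝ, P.natDegree ≤ q - 1 ∧
      ∀ x ∈ interior (pieceSet M j), HasDerivAt s (P.eval x) x := by
  obtain ⟨P, hP, hsP⟩ := hs j hj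
  refine ⟨P.derivative, (Polynomial.natDegree_derivative_le P).trans (Nat.sub_le_sub_right hP 1),
    fun x hx ↦ (P.hasDerivAt x).congr_of_eventuallyEq ?_⟩
  exact hsP.eventuallyEq_of_mem (isOpen_interior.mem_nhds hx)

protected lemma deriv (hs : IsPiecewisePoly M q s) : IsPiecewisePoly M (q - 1) (deriv s) := by
  intro j hj
  obtain ⟨P, hP, hsP⟩ := hs.exists_hasDerivAt hj
  exact ⟨P, hP, fun x hx ↦ (hsP x hx).deriv⟩

variable [NeZero M]

lemma differentiableAt (hs : IsPiecewisePoly M q s) {x : ℝ} (hx : x ∉ breakpoints M) :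
    DifferentiableAt ℝ s x := by
  obtain ⟨P, -, hsP⟩ := hs.exists_hasDerivAt (pieceIndex_lt (x := x))
  exact (hsP x (mem_interior_pieceSet pieceIndex_lt mem_pieceSet_pieceIndex hx)).differentiableAt

lemma intervalIntegrable (hs : IsPiecewisePoly M q s) (a b : ℝ) :
    IntervalIntegrable s volume a b := by
  rw [intervalIntegrable_iff]
  have hpieces : IntegrableOn s (⋃ j : Fin M, interior (pieceSet M j) ∩ uIoc a b) := by
    refine integrableOn_finite_iUnion.2 fun j ↦ ?_
    obtain ⟨P, -, hsP⟩ := hs j j.2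
    have hP : IntegrableOn (P.eval ·) (uIoc a b) :=
      intervalIntegrable_iff.1 (P.continuous.intervalIntegrable a b)
    exact (hP.mono_set inter_subset_right).congr_fun (fun x hx ↦ (hsP hx.1).symm)
      (isOpen_interior.measurableSet.inter measurableSet_uIoc)
  refine hpieces.mono_set_ae ?_
  filter_upwards [(countable_breakpoints M).ae_notMem volume] with x hx hxab
  exact mem_iUnion.2 ⟨⟨pieceIndex M x, pieceIndex_lt⟩,
    mem_interior_pieceSet pieceIndex_lt mem_pieceSet_pieceIndex hx, hxab⟩

lemma memLp (hs : IsPiecewisePoly M q s) : MemLp s 2 (volume.restrict (Ioo (0 : ℝ) 1)) := by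
  have hint {u : ℝ → ℝ} (hu : IntervalIntegrable u volume 0 1) :
      Integrable u (volume.restrict (Ioo 0 1)) :=
    (intervalIntegrable_iff_integrableOn_Ioo_of_le zero_le_one).1 hu
  rw [memLp_two_iff_integrable_sq (hint (hs.intervalIntegrable 0 1)).aestronglyMeasurable]
  simp only [sq]
  exact hint ((hs.mul hs).intervalIntegrable 0 1)

end IsPiecewisePoly

lemma exists_polynomial_derivative_eq {P : Polynomial ℝ} (hP : P.natDegree ≤ q) :
    ∃ Q : Polynomial ℝ, Q.natDegree ≤ q + 1 ∧ Q.derivative = P := by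
  refine ⟨∑ i ∈ Finset.range (q + 1), .monomial (i + 1) (P.coeff i / (i + 1)), ?_, ?_⟩
  · refine Polynomial.natDegree_sum_le_of_forall_le _ _ fun i hi ↦ ?_
    exact (Polynomial.natDegree_monomial_le _).trans (Finset.mem_range.1 hi)
  · conv_rhs => rw [P.as_sum_range' (q + 1) (Nat.lt_succ_of_le hP)]
    rw [Polynomial.derivative_sum]
    refine Finset.sum_congr rfl fun i _ ↦ ?_
    rw [Polynomial.derivative_monomial]
    congr 1
    push_cast
    exact div_mul_cancel₀ _ (Nat.cast_add_one_ne_zero (R := ℝ) i)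

lemma IsPiecewisePoly.exists_eval_eq_primitive [NeZero M] (hs : IsPiecewisePoly M q s) {j : ℕ}
    (hj : j < M) : ∃ Q : Polynomial ℝ, Q.natDegree ≤ q + 1 ∧
      ∀ x ∈ pieceSet M j, ∫ t in (0 : ℝ)..x, s t = Q.eval x := by
  obtain ⟨P, hP, hsP⟩ := hs j hj
  obtain ⟨Q, hQ, rfl⟩ := exists_polynomial_derivative_eq hP
  set a := (j : ℝ) / M
  refine ⟨Q + .C ((∫ t in (0 : ℝ)..a, s t) - Q.eval a), ?_, fun x hx ↦ ?_⟩
  · rwa [Polynomial.natDegree_add_C]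
  have hpiece : ∫ t in a..x, s t = Q.eval x - Q.eval a := by
    rw [← intervalIntegral.integral_eq_sub_of_hasDerivAt (fun t _ ↦ Q.hasDerivAt t)
      (Q.derivative.continuous.intervalIntegrable _ _)]
    refine intervalIntegral.integral_congr_ae ?_
    filter_upwards [(countable_breakpoints M).ae_notMem volume] with t ht hat
    exact hsP (mem_interior_pieceSet hj ((ordConnected_pieceSet hj).uIcc_subset
      (node_mem_pieceSet hj) hx (uIoc_subset_uIcc hat)) ht)
  rw [← intervalIntegral.integral_add_adjacent_intervals (hs.intervalIntegrable 0 a)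
    (hs.intervalIntegrable a x), hpiece, Polynomial.eval_add, Polynomial.eval_C]
  ring

lemma IsPiecewisePoly.isSpline_primitive [NeZero M] (hs : IsPiecewisePoly M q s)
    (hsmooth : ContDiffOn ℝ q (fun x ↦ ∫ t in (0 : ℝ)..x, s t) (Ioo 0 1)) :
    IsSpline M (q + 1) (fun x ↦ ∫ t in (0 : ℝ)..x, s t) :=
  ⟨hsmooth, fun _ hj ↦ hs.exists_eval_eq_primitive hj⟩

end PiecewisePolynomials

section Splines

variable {M p : ℕ} {u : ℝ → ℝ}

lemma IsSpline.isPiecewisePoly (hu : IsSpline M p u) : IsPiecewisePoly M p u := fun j hj ↦ by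
  obtain ⟨P, hP, huP⟩ := hu.2 j hj
  exact ⟨P, hP, fun x hx ↦ huP x (interior_subset hx)⟩

lemma IsSpline.of_dvd {N : ℕ} (hMN : M ∣ N) (hu : IsSpline M p u) : IsSpline N p u := by
  refine ⟨hu.1, fun j hj ↦ ?_⟩
  obtain ⟨k, rfl⟩ := hMN
  have hM : 0 < M := Nat.pos_of_mul_pos_right (j.zero_le.trans_lt hj)
  obtain ⟨P, hP, huP⟩ := hu.2 (j / (M * k / M)) <| by
    rw [Nat.mul_div_cancel_left _ hM]
    exact Nat.div_lt_of_lt_mul (mul_comm M k ▸ hj)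
  exact ⟨P, hP, fun x hx ↦ huP x (pieceSet_subset_of_dvd ⟨k, rfl⟩ hj hx)⟩

lemma isSpline_const (M p : ℕ) (c : ℝ) : IsSpline M p fun _ ↦ c :=
  ⟨contDiffOn_const, fun _ _ ↦ ⟨.C c, by simp, by simp⟩⟩

lemma isSpline_id (M : ℕ) (hp : 1 ≤ p) : IsSpline M p id :=
  ⟨contDiffOn_id, fun _ _ ↦ ⟨.X, Polynomial.natDegree_X_le.trans hp, by simp⟩⟩

lemma IsSpline.continuous [NeZero M] (hu : IsSpline M p u) : Continuous u := by
  refine (locallyFinite_of_finite fun j : Fin M ↦ pieceSet M j).continuous ?_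
    (fun j ↦ isClosed_pieceSet M j) fun j ↦ ?_
  · exact eq_univ_of_forall fun x ↦
      mem_iUnion.2 ⟨⟨_, pieceIndex_lt⟩, mem_pieceSet_pieceIndex⟩
  · obtain ⟨P, -, huP⟩ := hu.2 j j.2
    exact P.continuous.continuousOn.congr huP

lemma IsSpline.integral_deriv [NeZero M] (hu : IsSpline M p u) (x : ℝ) :
    ∫ t in (0 : ℝ)..x, deriv u t = u x - u 0 :=
  integral_eq_of_hasDerivAt_off_countable u (deriv u) (countable_breakpoints M)
    hu.continuous.continuousOn (fun _ hx ↦ (hu.isPiecewisePoly.differentiableAt hx.2).hasDerivAt)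
    (hu.isPiecewisePoly.deriv.intervalIntegrable 0 x)

lemma contDiffOn_primitive {n : ℕ} {s : Set ℝ} (hs : IsOpen s) (hu : Continuous u)
    (hus : ContDiffOn ℝ n u s) : ContDiffOn ℝ (n + 1) (fun x ↦ ∫ t in (0 : ℝ)..x, u t) s := by
  have hderiv : ∀ x, HasDerivAt (fun x ↦ ∫ t in (0 : ℝ)..x, u t) (u x) x := fun x ↦
    (hu.integral_hasStrictDerivAt 0 x).hasDerivAt
  rw [contDiffOn_succ_iff_deriv_of_isOpen hs]
  refine ⟨fun x _ ↦ (hderiv x).differentiableAt.differentiableWithinAt, by simp, ?_⟩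
  rwa [funext fun x ↦ (hderiv x).deriv]

lemma IsSpline.contDiffOn_primitive [NeZero M] (hu : IsSpline M p u) :
    ContDiffOn ℝ p (fun x ↦ ∫ t in (0 : ℝ)..x, u t) (Ioo 0 1) :=
  (SplineMG.contDiffOn_primitive isOpen_Ioo hu.continuous hu.1).of_le
    (by exact_mod_cast (by omega : p ≤ p - 1 + 1))

/-- The space of splines as a submodule of the functions on `ℝ`. -/
def splineSpace (M p : ℕ) : Submodule ℝ (ℝ → ℝ) where
  carrier := {w | IsSpline M p w}
  zero_mem' := isSpline_const M p 0
  add_mem' := by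
    rintro u v ⟨hu, hu'⟩ ⟨hv, hv'⟩
    refine ⟨hu.add hv, fun j hj ↦ ?_⟩
    obtain ⟨P, hP, huP⟩ := hu' j hj
    obtain ⟨Q, hQ, hvQ⟩ := hv' j hj
    refine ⟨P + Q, Polynomial.natDegree_add_le_of_degree_le hP hQ, fun x hx ↦ ?_⟩
    rw [Polynomial.eval_add, Pi.add_apply, huP x hx, hvQ x hx]
  smul_mem' := by
    rintro c u ⟨hu, hu'⟩
    refine ⟨contDiffOn_const.smul hu, fun j hj ↦ ?_⟩
    obtain ⟨P, hP, huP⟩ := hu' j hj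
    refine ⟨c • P, (Polynomial.natDegree_smul_le c P).trans hP, fun x hx ↦ ?_⟩
    rw [Polynomial.eval_smul, Pi.smul_apply, huP x hx]

instance [NeZero M] : FiniteDimensional ℝ (splineSpace M p) := by
  let polys (j : Fin M) : Submodule ℝ (pieceSet M j → ℝ) :=
    (Polynomial.degreeLT ℝ (p + 1)).map (LinearMap.pi fun x ↦ Polynomial.leval (x : ℝ))
  have hpolys (w : splineSpace M p) (j : Fin M) :
      LinearMap.funLeft ℝ ℝ (Subtype.val : pieceSet M j → ℝ) w ∈ polys j := by
    obtain ⟨P, hP, hwP⟩ := w.2.2 j j.2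
    refine ⟨P, Polynomial.mem_degreeLT.2 ?_, funext fun x ↦ (hwP x x.2).symm⟩
    exact Polynomial.degree_lt_iff_coeff_zero _ _ |>.2 fun n hn ↦
      Polynomial.coeff_eq_zero_of_natDegree_lt (hP.trans_lt hn)
  let restrictPieces : splineSpace M p →ₗ[ℝ] ∀ j, polys j := LinearMap.pi fun j ↦
    (LinearMap.funLeft ℝ ℝ Subtype.val ∘ₗ (splineSpace M p).subtype).codRestrict _ (hpolys · j)
  refine FiniteDimensional.of_injective restrictPieces fun w w' hww' ↦ ?_
  ext x
  have hpiece := congrArg Subtype.val (congrFun hww' ⟨pieceIndex M x, pieceIndex_lt⟩)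
  exact congrFun hpiece ⟨x, mem_pieceSet_pieceIndex⟩

end Splines

section SplineModel

open scoped RealInnerProductSpace

variable {M p : ℕ} [NeZero M]

/-- The class in `L²(0,1)` of a spline. -/
def splineIncl (M p : ℕ) [NeZero M] : splineSpace M p →ₗ[ℝ] UnitL2 where
  toFun w := w.2.isPiecewisePoly.memLp.toLp w
  map_add' _ _ := rfl
  map_smul' _ _ := rfl

lemma splineIncl_ae_eq (w : splineSpace M p) :
    splineIncl M p w =ᵐ[volume.restrict (Ioo (0 : ℝ) 1)] w :=
  MemLp.coeFn_toLp w.2.isPiecewisePoly.memLp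

lemma ae_notMem_breakpoints (M : ℕ) :
    ∀ᵐ x ∂volume.restrict (Ioo (0 : ℝ) 1), x ∉ breakpoints M :=
  (countable_breakpoints M).ae_notMem _

/-- The class in `L²(0,1)` of the derivative of a spline. -/
def splineDer (M p : ℕ) [NeZero M] : splineSpace M p →ₗ[ℝ] UnitL2 where
  toFun w := w.2.isPiecewisePoly.deriv.memLp.toLp (deriv w)
  map_add' u v := by
    rw [← MemLp.toLp_add]
    refine MemLp.toLp_congr _ _ ?_
    filter_upwards [ae_notMem_breakpoints M] with x hx
    exact deriv_add (u.2.isPiecewisePoly.differentiableAt hx)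
      (v.2.isPiecewisePoly.differentiableAt hx)
  map_smul' c u := by
    rw [RingHom.id_apply, ← MemLp.toLp_const_smul]
    refine MemLp.toLp_congr _ _ ?_
    filter_upwards [ae_notMem_breakpoints M] with x hx
    exact deriv_const_smul c (u.2.isPiecewisePoly.differentiableAt hx)

lemma splineDer_ae_eq (w : splineSpace M p) :
    splineDer M p w =ᵐ[volume.restrict (Ioo (0 : ℝ) 1)] deriv w :=
  MemLp.coeFn_toLp w.2.isPiecewisePoly.deriv.memLp

lemma IsSpline.eq_zero_of_eqOn_Ioo {u : ℝ → ℝ} (hu : IsSpline M p u)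
    (hu0 : EqOn u 0 (Ioo 0 1)) : u = 0 := by
  funext x
  obtain ⟨P, -, huP⟩ := hu.2 _ (pieceIndex_lt (x := x))
  set j := pieceIndex M x
  have hj : j < M := pieceIndex_lt
  have hP : P = 0 := by
    have hlt : (j : ℝ) / M < (j + 1 : ℕ) / M := by
      have : (0 : ℝ) < M := mod_cast NeZero.pos M
      gcongr
      exact j.lt_succ_self
    refine P.eq_zero_of_infinite_isRoot ((Ioo_infinite hlt).mono fun y hy ↦ ?_)
    have hy01 : y ∈ Ioo (0 : ℝ) 1 := by
      rw [← interior_Icc] at hy ⊢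
      exact interior_mono (Icc_mesh_subset hj) hy
    exact (huP y (Icc_subset_pieceSet hj (Ioo_subset_Icc_self hy))).symm.trans (hu0 hy01)
  rw [huP x mem_pieceSet_pieceIndex, hP, Polynomial.eval_zero, Pi.zero_apply]

lemma splineIncl_injective : Function.Injective (splineIncl M p) := by
  refine (injective_iff_map_eq_zero _).2 fun w hw ↦ Subtype.ext ?_
  refine w.2.eq_zero_of_eqOn_Ioo (Measure.eqOn_open_of_ae_eq (μ := volume) ?_ isOpen_Ioo
    w.2.continuous.continuousOn continuousOn_const)
  exact (splineIncl_ae_eq w).symm.trans (hw ▸ Lp.coeFn_zero ℝ 2 _)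

/-- Splines of degree `p`, as a space of weakly differentiable functions. -/
@[simps incl der]
def splineModel (M p : ℕ) [NeZero M] :
    H1Model integrationOp unitOne (splineSpace M p) where
  incl := splineIncl M p
  der := splineDer M p
  atZero := LinearMap.proj 0 ∘ₗ (splineSpace M p).subtype
  const := ⟨fun _ ↦ 1, isSpline_const M p 1⟩
  incl_injective := splineIncl_injective
  der_const := by
    refine Lp.ext ((splineDer_ae_eq _).trans (.trans (.of_eq ?_) (Lp.coeFn_zero ℝ 2 _).symm))
    exact deriv_const' 1
  atZero_const := rfl
  incl_eq w := by
    refine Lp.ext ?_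
    filter_upwards [splineIncl_ae_eq w, unitOne_ae_eq, integrationOp_ae_eq (splineDer M p w),
      Lp.coeFn_add ((w : ℝ → ℝ) 0 • unitOne) (integrationOp (splineDer M p w)),
      Lp.coeFn_smul ((w : ℝ → ℝ) 0) unitOne, ae_restrict_mem measurableSet_Ioo]
      with x hincl hone hint hadd hsmul hx
    refine hincl.trans (Eq.trans ?_ hadd.symm)
    rw [Pi.add_apply, hsmul, hint, Pi.smul_apply, hone,
      primitive_congr_ae (splineDer_ae_eq w) (Ioo_subset_Icc_self hx), w.2.integral_deriv,
      smul_eq_mul, mul_one, add_sub_cancel]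

end SplineModel

section SplineApproximation

variable {M p q : ℕ}

/-- The step function which interpolates the primitive of `f` at the left ends of the pieces. -/
def stepPrimitive (M : ℕ) (f : ℝ → ℝ) (x : ℝ) : ℝ :=
  ∫ t in (0 : ℝ)..(pieceIndex M x / M), f t

lemma isPiecewisePoly_stepPrimitive (M : ℕ) (f : ℝ → ℝ) :
    IsPiecewisePoly M 0 (stepPrimitive M f) := fun j hj ↦
  ⟨.C (∫ t in (0 : ℝ)..(j / M), f t), by simp, fun x hx ↦ by
    simp only [stepPrimitive, pieceIndex_eq_of_mem_interior hj hx, Polynomial.eval_C]⟩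

lemma primitive_sub_stepPrimitive {f : ℝ → ℝ} (hf : IntervalIntegrable f volume 0 1) {k : ℕ}
    (hk : k < M) {x : ℝ} (hx : x ∈ Ioo ((k : ℝ) / M) ((k + 1 : ℕ) / M)) :
    (∫ t in (0 : ℝ)..x, f t) - stepPrimitive M f x = ∫ t in (k : ℝ) / M..x, f t := by
  have hxk : x ∈ interior (pieceSet M k) :=
    interior_mono (Icc_subset_pieceSet hk) (by rwa [interior_Icc])
  have hsub {y : ℝ} (hy : y ∈ Icc ((k : ℝ) / M) ((k + 1 : ℕ) / M)) :
      IntervalIntegrable f volume 0 y :=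
    hf.mono_set (uIcc_subset_uIcc_left (Icc_subset_uIcc (Icc_mesh_subset hk hy)))
  rw [stepPrimitive, pieceIndex_eq_of_mem_interior hk hxk]
  exact intervalIntegral.integral_interval_sub_left (hsub (Ioo_subset_Icc_self hx))
    (hsub (left_mem_Icc.2 (hx.1.trans hx.2).le))

variable [NeZero M]

lemma IsPiecewisePoly.toLp_mem_range_splineDer {s : ℝ → ℝ} (hs : IsPiecewisePoly M q s)
    (hsmooth : ContDiffOn ℝ q (fun x ↦ ∫ t in (0 : ℝ)..x, s t) (Ioo 0 1)) :
    hs.memLp.toLp s ∈ LinearMap.range (splineDer M (q + 1)) := by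
  refine ⟨⟨_, hs.isSpline_primitive hsmooth⟩,
    Lp.ext ((splineDer_ae_eq _).trans (.trans ?_ hs.memLp.coeFn_toLp.symm))⟩
  refine (ae_restrict_iff' measurableSet_Ioo).2 ?_
  filter_upwards [(hs.intervalIntegrable 0 1).ae_hasDerivAt_integral] with x hx hx01
  exact (hx (Icc_subset_uIcc (Ioo_subset_Icc_self hx01)) 0 left_mem_uIcc).deriv

lemma range_splineIncl_le_range_splineDer :
    LinearMap.range (splineIncl M p) ≤ LinearMap.range (splineDer M (p + 1)) := by
  rintro _ ⟨w, rfl⟩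
  exact w.2.isPiecewisePoly.toLp_mem_range_splineDer w.2.contDiffOn_primitive

lemma unitOne_mem_range_splineDer (hp : 1 ≤ p) :
    unitOne ∈ LinearMap.range (splineDer M p) := by
  refine ⟨⟨id, isSpline_id M hp⟩, Lp.ext ((splineDer_ae_eq _).trans ?_)⟩
  exact (Filter.EventuallyEq.of_eq deriv_id').trans unitOne_ae_eq.symm

lemma map_integrationOp_range_splineDer_le :
    (LinearMap.range (splineDer M p)).map integrationOp ≤
      LinearMap.range (splineDer M (p + 1)) := by
  rintro _ ⟨_, ⟨w, rfl⟩, rfl⟩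
  refine range_splineIncl_le_range_splineDer
    ⟨w - (splineModel M p).atZero w • (splineModel M p).const, ?_⟩
  have hone := (splineModel M p).incl_const
  have hw := (splineModel M p).incl_eq w
  rw [splineModel_incl] at hone hw
  rw [map_sub, map_smul, hone, hw, add_sub_cancel_left, splineModel_der]

lemma toLp_stepPrimitive_mem_range_splineDer (f : ℝ → ℝ) :
    (isPiecewisePoly_stepPrimitive M f).memLp.toLp _ ∈ LinearMap.range (splineDer M 1) := by
  refine (isPiecewisePoly_stepPrimitive M f).toLp_mem_range_splineDer ?_
  exact contDiffOn_zero.2 (intervalIntegral.continuous_primitive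
    (isPiecewisePoly_stepPrimitive M f).intervalIntegrable 0).continuousOn

lemma approximatesRange_range_splineDer_one :
    ApproximatesRange integrationOp (LinearMap.range (splineDer M 1)) (1 / M) := by
  intro f
  refine ⟨_, toLp_stepPrimitive_mem_range_splineDer f, ?_⟩
  refine (sq_le_sq₀ (norm_nonneg _) (by positivity)).1 ?_
  have herror : integrationOp f - (isPiecewisePoly_stepPrimitive M f).memLp.toLp _
      =ᵐ[volume.restrict (Ioo (0 : ℝ) 1)]
        fun x ↦ (∫ t in (0 : ℝ)..x, f t) - stepPrimitive M f x :=
    (Lp.coeFn_sub _ _).trans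
      ((integrationOp_ae_eq f).sub (isPiecewisePoly_stepPrimitive M f).memLp.coeFn_toLp)
  rw [mul_pow, f.norm_sq_eq, UnitL2.norm_sq_eq]
  refine (primitive_congr_ae (herror.pow_const 2) (right_mem_Icc.2 zero_le_one)).trans_le ?_
  exact integral_sq_le_of_eq_mesh_primitive f.intervalIntegrable f.intervalIntegrable_sq
    fun k hk x hx ↦ primitive_sub_stepPrimitive f.intervalIntegrable hk hx

theorem approximatesRange_range_splineDer (hp : 1 ≤ p) :
    ApproximatesRange integrationOp (LinearMap.range (splineDer M p)) (1 / M) := by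
  induction p, hp using Nat.le_induction with
  | base => exact approximatesRange_range_splineDer_one
  | succ p hp ih =>
    exact ih.of_map_le isIntegrationOp_integrationOp (by positivity)
      (unitOne_mem_range_splineDer hp) map_integrationOp_range_splineDer_le

end SplineApproximation

section SplineEigenbasis

open scoped RealInnerProductSpace

variable {M N p : ℕ} [NeZero N]

lemma range_splineDer_le_of_dvd [NeZero M] (hMN : M ∣ N) :
    LinearMap.range (splineDer M p) ≤
      ((splineSpace M p).submoduleOf (splineSpace N p)).map (splineDer N p) := by
  rintro _ ⟨w, rfl⟩
  exact ⟨⟨w, w.2.of_dvd hMN⟩, w.2, rfl⟩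

lemma ip0_eq_inner {f g : UnitL2} {u v : ℝ → ℝ} (hf : f =ᵐ[volume.restrict (Ioo (0 : ℝ) 1)] u)
    (hg : g =ᵐ[volume.restrict (Ioo (0 : ℝ) 1)] v) : ip0 u v = ⟪f, g⟫ := by
  rw [UnitL2.inner_eq, ← setIntegral_Ioo_eq_intervalIntegral]
  exact integral_congr_ae (hf.mul hg).symm

/-- A basis of the splines of degree `p` on `N` pieces which is orthonormal in `L²(0,1)` and
orthogonal for the seminorm of `H¹(0,1)`, with energies `l`. -/
structure IsSplineEigenbasis (N p : ℕ) {ι : Type*} [Fintype ι] [DecidableEq ι] (φ : ι → ℝ → ℝ)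
    (l : ι → ℝ) : Prop where
  isSpline : ∀ a, IsSpline N p (φ a)
  exists_eq_sum : ∀ w, IsSpline N p w → ∃ c : ι → ℝ, w = ∑ a, c a • φ a
  ip0_eq : ∀ a b, ip0 (φ a) (φ b) = if a = b then 1 else 0
  ip0_deriv_eq : ∀ a b, ip0 (deriv (φ a)) (deriv (φ b)) = if a = b then l a else 0

lemma Diagonalizes.isSplineEigenbasis {ι : Type*} [Fintype ι] [DecidableEq ι]
    {φ : Module.Basis ι ℝ (splineSpace N p)} {l : ι → ℝ}
    (hincl : Diagonalizes φ (splineIncl N p) 1) (hder : Diagonalizes φ (splineDer N p) l) :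
    IsSplineEigenbasis N p (fun a ↦ φ a) l where
  isSpline a := (φ a).2
  exists_eq_sum w hw := ⟨φ.repr ⟨w, hw⟩, by
    simpa only [Submodule.coe_sum, Submodule.coe_smul] using
      congrArg Subtype.val (φ.sum_repr ⟨w, hw⟩).symm⟩
  ip0_eq a b := (ip0_eq_inner (splineIncl_ae_eq _) (splineIncl_ae_eq _)).trans (hincl a b)
  ip0_deriv_eq a b := (ip0_eq_inner (splineDer_ae_eq _) (splineDer_ae_eq _)).trans (hder a b)

theorem exists_isSplineEigenbasis_stableApprox (hMN : M ∣ N) (hp : 1 ≤ p) :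
    ∃ (n : ℕ) (φ : Fin n → ℝ → ℝ) (l : Fin n → ℝ) (R : Matrix (Fin n) (Fin n) ℝ),
      IsSplineEigenbasis N p φ l ∧ 0 ≤ l ∧ (∀ b, IsSpline M p (∑ a, R a b • φ a)) ∧
      StableApprox R l 4 (2 * (1 / M) ^ 2) := by
  have : NeZero M := ⟨ne_zero_of_dvd_ne_zero (NeZero.ne N) hMN⟩
  have hrange := range_splineDer_le_of_dvd (p := p) hMN
  obtain ⟨n, φ, l, R, hincl, hder, hR, hstable⟩ :=
    (splineModel N p).exists_stableApprox (δ := 1 / M) isIntegrationOp_integrationOp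
      (V' := (splineSpace M p).submoduleOf (splineSpace N p)) (isSpline_const M p 1)
      ((approximatesRange_range_splineDer hp).mono hrange) (by positivity)
      (hrange (unitOne_mem_range_splineDer hp))
  refine ⟨n, fun a ↦ φ a, l, R, hincl.isSplineEigenbasis hder, hder.nonneg, fun b ↦ ?_, hstable⟩
  have hcoarse : IsSpline M p (∑ a, R a b • φ a : splineSpace N p) := hR b
  simpa only [Submodule.coe_sum, Submodule.coe_smul] using hcoarse

end SplineEigenbasis

section ProductIntegrals

variable {κ ι α : Type*} [Fintype κ] [MeasurableSpace α] {μ : Measure α} [SigmaFinite μ]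
  {ψ : κ → ι → α → ℝ}

lemma integrable_const_mul_prod_mul (hψ : ∀ i a b, Integrable (fun x ↦ ψ i a x * ψ i b x) μ)
    (r : ℝ) (k k' : κ → ι) :
    Integrable (fun x ↦ r * ∏ i, (ψ i (k i) (x i) * ψ i (k' i) (x i))) (.pi fun _ ↦ μ) :=
  (Integrable.fintype_prod fun i ↦ hψ i (k i) (k' i)).const_mul r

lemma integral_prod_mul_of_orthogonal [DecidableEq ι] {l : κ → ι → ℝ}
    (hl : ∀ i a b, ∫ x, ψ i a x * ψ i b x ∂μ = if a = b then l i a else 0) (k k' : κ → ι) :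
    ∫ x, ∏ i, (ψ i (k i) (x i) * ψ i (k' i) (x i)) ∂.pi (fun _ : κ ↦ μ) =
      if k = k' then ∏ i, l i (k i) else 0 := by
  rw [integral_fintype_prod_eq_prod fun i x ↦ ψ i (k i) x * ψ i (k' i) x]
  simp only [hl]
  split_ifs with hkk'
  · simp [hkk']
  · obtain ⟨i, hi⟩ := Function.ne_iff.1 hkk'
    exact Finset.prod_eq_zero (Finset.mem_univ i) (if_neg hi)

end ProductIntegrals

section TensorSums

variable {κ ι α : Type*} [Fintype κ] [DecidableEq κ] [Fintype ι]

/-- The function `∑ₖ c k ∏ᵢ ψᵢ (k i) (x i)` with coefficients `c` in the tensor product of the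
systems `ψᵢ`. -/
def tensorSum (ψ : κ → ι → α → ℝ) : ((κ → ι) → ℝ) →ₗ[ℝ] (κ → α) → ℝ :=
  Fintype.linearCombination ℝ fun k x ↦ ∏ i, ψ i (k i) (x i)

lemma tensorSum_apply (ψ : κ → ι → α → ℝ) (c : (κ → ι) → ℝ) (x : κ → α) :
    tensorSum ψ c x = ∑ k, c k * ∏ i, ψ i (k i) (x i) := by
  simp [tensorSum, Fintype.linearCombination_apply]

lemma tensorSum_prod (ψ : κ → ι → α → ℝ) (C : κ → ι → ℝ) (x : κ → α) :
    tensorSum ψ (fun k ↦ ∏ i, C i (k i)) x = ∏ i, ∑ a, C i a * ψ i a (x i) := by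
  simp only [tensorSum_apply, Finset.prod_univ_sum, Fintype.piFinset_univ, Finset.prod_mul_distrib]

lemma tensorSum_mul_tensorSum (ψ : κ → ι → α → ℝ) (c c' : (κ → ι) → ℝ) (x : κ → α) :
    tensorSum ψ c x * tensorSum ψ c' x =
      ∑ k, ∑ k', c k * c' k' * ∏ i, (ψ i (k i) (x i) * ψ i (k' i) (x i)) := by
  simp only [tensorSum_apply, Finset.sum_mul_sum, Finset.prod_mul_distrib, mul_mul_mul_comm]

variable [MeasurableSpace α] {μ : Measure α} [SigmaFinite μ] {ψ : κ → ι → α → ℝ}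

lemma integrable_tensorSum_mul_tensorSum
    (hψ : ∀ i a b, Integrable (fun x ↦ ψ i a x * ψ i b x) μ) (c c' : (κ → ι) → ℝ) :
    Integrable (fun x ↦ tensorSum ψ c x * tensorSum ψ c' x) (.pi fun _ ↦ μ) := by
  simp only [tensorSum_mul_tensorSum]
  exact integrable_finsetSum _ fun k _ ↦ integrable_finsetSum _ fun k' _ ↦
    integrable_const_mul_prod_mul hψ _ k k'

lemma integral_tensorSum_mul_tensorSum [DecidableEq ι] {l : κ → ι → ℝ}
    (hψ : ∀ i a b, Integrable (fun x ↦ ψ i a x * ψ i b x) μ)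
    (hl : ∀ i a b, ∫ x, ψ i a x * ψ i b x ∂μ = if a = b then l i a else 0)
    (c c' : (κ → ι) → ℝ) :
    ∫ x, tensorSum ψ c x * tensorSum ψ c' x ∂.pi (fun _ ↦ μ) =
      ∑ k, (∏ i, l i (k i)) * c k * c' k := by
  have hint := integrable_const_mul_prod_mul hψ
  simp only [tensorSum_mul_tensorSum]
  rw [integral_finsetSum _ fun k _ ↦ integrable_finsetSum _ fun k' _ ↦ hint _ k k']
  refine Finset.sum_congr rfl fun k _ ↦ ?_
  rw [integral_finsetSum _ fun k' _ ↦ hint _ k k']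
  simp only [integral_const_mul, integral_prod_mul_of_orthogonal hl, mul_ite, mul_zero,
    Finset.sum_ite_eq, Finset.mem_univ, if_true]
  ring

end TensorSums

section EnergyCoordinates

variable {d N p : ℕ} {ι : Type*} [Fintype ι]

lemma hasDerivAt_prod_update {κ : Type*} [Fintype κ] [DecidableEq κ] {f : κ → ℝ → ℝ} {x : κ → ℝ}
    {i : κ} (hf : DifferentiableAt ℝ (f i) (x i)) :
    HasDerivAt (fun t ↦ ∏ j, f j (Function.update x i t j))
      (∏ j, (if j = i then deriv (f j) else f j) (x j)) (x i) := by
  have hother (t : ℝ) : ∏ j ∈ Finset.univ.erase i, f j (Function.update x i t j) =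
      ∏ j ∈ Finset.univ.erase i, f j (x j) :=
    Finset.prod_congr rfl fun j hj ↦ by rw [Function.update_of_ne (Finset.ne_of_mem_erase hj)]
  have hother' : ∏ j ∈ Finset.univ.erase i, (if j = i then deriv (f j) else f j) (x j) =
      ∏ j ∈ Finset.univ.erase i, f j (x j) :=
    Finset.prod_congr rfl fun j hj ↦ by rw [if_neg (Finset.ne_of_mem_erase hj)]
  simp only [← Finset.mul_prod_erase _ _ (Finset.mem_univ i), hother, hother',
    Function.update_self, if_true]
  exact hf.hasDerivAt.mul_const _

lemma volume_restrict_cube (d : ℕ) :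
    (volume : Measure (Fin d → ℝ)).restrict (cube d) = .pi fun _ ↦ volume.restrict (Ioo 0 1) := by
  rw [cube, volume_pi, Measure.restrict_pi_pi]

/-- The systems of the tensor product after differentiation in direction `i`. -/
def derivSystem (φ : ι → ℝ → ℝ) (i j : Fin d) (a : ι) : ℝ → ℝ :=
  if j = i then deriv (φ a) else φ a

lemma pd_tensorSum {φ : ι → ℝ → ℝ} {i : Fin d} {x : Fin d → ℝ}
    (hφ : ∀ a, DifferentiableAt ℝ (φ a) (x i)) (c : (Fin d → ι) → ℝ) :
    pd d i (tensorSum (fun _ ↦ φ) c) x = tensorSum (derivSystem φ i) c x := by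
  simp only [pd, tensorSum_apply, derivSystem]
  exact (HasDerivAt.fun_sum fun k _ ↦
    (hasDerivAt_prod_update (f := fun j ↦ φ (k j)) (hφ (k i))).const_mul (c k)).deriv

lemma IsPiecewisePoly.integrable_mul [NeZero N] {q r : ℕ} {s t : ℝ → ℝ}
    (hs : IsPiecewisePoly N q s) (ht : IsPiecewisePoly N r t) :
    Integrable (fun x ↦ s x * t x) (volume.restrict (Ioo 0 1)) :=
  hs.memLp.integrable_mul ht.memLp

lemma ae_forall_notMem_breakpoints (d N : ℕ) :
    ∀ᵐ x ∂Measure.pi fun _ : Fin d ↦ volume.restrict (Ioo (0 : ℝ) 1),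
      ∀ i, x i ∉ breakpoints N :=
  ae_all_iff.2 fun i ↦ (Measure.tendsto_eval_ae_ae
    (μ := fun _ : Fin d ↦ volume.restrict (Ioo (0 : ℝ) 1)) (i := i)).eventually
      (ae_notMem_breakpoints N)

namespace IsSplineEigenbasis

variable [DecidableEq ι] {φ : ι → ℝ → ℝ} {l : ι → ℝ}

lemma integral_derivSystem_mul (h : IsSplineEigenbasis N p φ l) (i j : Fin d) (a b : ι) :
    ∫ x in Ioo 0 1, derivSystem φ i j a x * derivSystem φ i j b x =
      if a = b then (if j = i then l a else 1) else 0 := by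
  unfold derivSystem
  split_ifs with hj hab hab
  · exact (h.ip0_deriv_eq a b).trans (if_pos hab)
  · exact (h.ip0_deriv_eq a b).trans (if_neg hab)
  · exact (h.ip0_eq a b).trans (if_pos ‹_›)
  · exact (h.ip0_eq a b).trans (if_neg ‹_›)

variable [NeZero N]

lemma integrable_mul (h : IsSplineEigenbasis N p φ l) (a b : ι) :
    Integrable (fun x ↦ φ a x * φ b x) (volume.restrict (Ioo 0 1)) :=
  (h.isSpline a).isPiecewisePoly.integrable_mul (h.isSpline b).isPiecewisePoly

lemma integrable_derivSystem_mul (h : IsSplineEigenbasis N p φ l) (i j : Fin d) (a b : ι) :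
    Integrable (fun x ↦ derivSystem φ i j a x * derivSystem φ i j b x)
      (volume.restrict (Ioo 0 1)) := by
  unfold derivSystem
  split_ifs
  · exact (h.isSpline a).isPiecewisePoly.deriv.integrable_mul
      (h.isSpline b).isPiecewisePoly.deriv
  · exact h.integrable_mul a b

lemma integral_tensorSum_mul (h : IsSplineEigenbasis N p φ l) (c c' : (Fin d → ι) → ℝ) :
    ∫ x, tensorSum (fun _ ↦ φ) c x * tensorSum (fun _ ↦ φ) c' x
      ∂.pi (fun _ ↦ volume.restrict (Ioo 0 1)) = ∑ k, c k * c' k := by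
  rw [integral_tensorSum_mul_tensorSum (fun _ ↦ h.integrable_mul) (l := 1) fun _ ↦ h.ip0_eq]
  simp

lemma l2normSqD_tensorSum (h : IsSplineEigenbasis N p φ l) (c : (Fin d → ι) → ℝ) :
    l2normSqD d (tensorSum (fun _ ↦ φ) c) = wsq 1 c := by
  rw [l2normSqD, volume_restrict_cube]
  simp only [sq, h.integral_tensorSum_mul, wsq, Pi.one_apply, one_mul]

lemma integral_derivSystem_tensorSum_mul (h : IsSplineEigenbasis N p φ l) (i : Fin d)
    (c c' : (Fin d → ι) → ℝ) :
    ∫ x, tensorSum (derivSystem φ i) c x * tensorSum (derivSystem φ i) c' x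
      ∂.pi (fun _ ↦ volume.restrict (Ioo 0 1)) = ∑ k, l (k i) * c k * c' k := by
  rw [integral_tensorSum_mul_tensorSum (h.integrable_derivSystem_mul i)
    (h.integral_derivSystem_mul i)]
  simp only [Finset.prod_ite_eq', Finset.mem_univ, if_true]

lemma aForm_tensorSum (h : IsSplineEigenbasis N p φ l) (c c' : (Fin d → ι) → ℝ) :
    aForm d (tensorSum (fun _ ↦ φ) c) (tensorSum (fun _ ↦ φ) c') =
      ∑ k, energyWeight l k * c k * c' k := by
  have hpd : ∀ᵐ x ∂Measure.pi fun _ : Fin d ↦ volume.restrict (Ioo (0 : ℝ) 1), ∀ i c,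
      pd d i (tensorSum (fun _ ↦ φ) c) x = tensorSum (derivSystem φ i) c x := by
    filter_upwards [ae_forall_notMem_breakpoints d N] with x hx i c
    exact pd_tensorSum (fun a ↦ (h.isSpline a).isPiecewisePoly.differentiableAt (hx i)) c
  have hint (i : Fin d) := integrable_tensorSum_mul_tensorSum (h.integrable_derivSystem_mul i) c c'
  calc aForm d (tensorSum (fun _ ↦ φ) c) (tensorSum (fun _ ↦ φ) c')
      = ∫ x, (∑ i, tensorSum (derivSystem φ i) c x * tensorSum (derivSystem φ i) c' x) +
          tensorSum (fun _ ↦ φ) c x * tensorSum (fun _ ↦ φ) c' x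
          ∂.pi (fun _ ↦ volume.restrict (Ioo 0 1)) := by
        rw [aForm, volume_restrict_cube]
        refine integral_congr_ae ?_
        filter_upwards [hpd] with x hx
        simp only [hx]
    _ = (∑ i, ∑ k, l (k i) * c k * c' k) + ∑ k, c k * c' k := by
        rw [integral_add (integrable_finsetSum _ fun i _ ↦ hint i)
          (integrable_tensorSum_mul_tensorSum (fun _ ↦ h.integrable_mul) c c'),
          integral_finsetSum _ fun i _ ↦ hint i, h.integral_tensorSum_mul]
        simp only [h.integral_derivSystem_tensorSum_mul]
    _ = ∑ k, energyWeight l k * c k * c' k := by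
        rw [Finset.sum_comm, ← Finset.sum_add_distrib]
        refine Finset.sum_congr rfl fun k _ ↦ ?_
        rw [energyWeight, ← Finset.sum_mul, ← Finset.sum_mul]
        ring

end IsSplineEigenbasis

end EnergyCoordinates

section TensorSplines

open scoped Matrix

variable {d M N p : ℕ} {ι : Type*} [Fintype ι] {φ : ι → ℝ → ℝ}

lemma tensorSpline_mono (hMN : M ∣ N) : TensorSpline d M p ≤ TensorSpline d N p := by
  refine Submodule.span_mono ?_
  rintro _ ⟨f, hf, rfl⟩
  exact ⟨f, fun i ↦ (hf i).of_dvd hMN, rfl⟩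

lemma IsSplineEigenbasis.tensorSpline_le_range [DecidableEq ι] {l : ι → ℝ}
    (h : IsSplineEigenbasis N p φ l) :
    TensorSpline d N p ≤ LinearMap.range (tensorSum (κ := Fin d) fun _ ↦ φ) := by
  refine Submodule.span_le.2 ?_
  rintro _ ⟨f, hf, rfl⟩
  choose C hC using fun i ↦ h.exists_eq_sum (f i) (hf i)
  refine ⟨fun k ↦ ∏ i, C i (k i), funext fun x ↦ (tensorSum_prod _ C x).trans ?_⟩
  simp only [hC, Finset.sum_apply, Pi.smul_apply, smul_eq_mul]

lemma tensorSum_dirOps_mem_tensorSpline {R : Matrix ι ι ℝ}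
    (hR : ∀ b, IsSpline M p (∑ a, R a b • φ a)) (c : (Fin d → ι) → ℝ) :
    tensorSum (fun _ ↦ φ) (dirOps R Finset.univ.toList c) ∈ TensorSpline d M p := by
  have hcolumns : tensorSum (fun _ ↦ φ) (dirOps R Finset.univ.toList c) =
      ∑ k, c k • fun x ↦ ∏ i, (∑ a, R a (k i) • φ a) (x i) := by
    funext x
    rw [tensorSum_apply, sum_dirOps_mul_prod R (Finset.nodup_toList _) c fun i a ↦ φ a (x i)]
    simp [Matrix.mulVec, dotProduct]
  rw [hcolumns]
  exact Submodule.sum_mem _ fun k _ ↦ Submodule.smul_mem _ _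
    (Submodule.subset_span ⟨_, fun i ↦ hR (k i), rfl⟩)

lemma wsq_sub_le_of_orthogonal {κ : Type*} [Fintype κ] {ω a b : κ → ℝ} (hω : 0 ≤ ω)
    (hab : ∑ k, ω k * (a - b) k * b k = 0) : wsq ω (a - b) ≤ wsq ω a := by
  have hpythagoras : wsq ω a = wsq ω (a - b) + wsq ω b + 2 * ∑ k, ω k * (a - b) k * b k := by
    simp only [wsq, Finset.mul_sum, ← Finset.sum_add_distrib, Pi.sub_apply]
    exact Finset.sum_congr rfl fun k _ ↦ by ring
  linarith [wsq_nonneg hω b]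

theorem l2normSqD_sub_le_of_galerkin [NeZero N] (hMN : M ∣ N) (hp : 1 ≤ p)
    {u v : (Fin d → ℝ) → ℝ} (hu : u ∈ TensorSpline d N p) (hv : v ∈ TensorSpline d M p)
    (horth : ∀ w ∈ TensorSpline d M p, aForm d (u - v) w = 0) :
    l2normSqD d (u - v) ≤ 2 * 8 ^ d * (1 / M) ^ 2 * aForm d u u := by
  obtain ⟨n, φ, l, R, hφ, hl, hR, hstable⟩ := exists_isSplineEigenbasis_stableApprox hMN hp
  obtain ⟨a, rfl⟩ := hφ.tensorSpline_le_range hu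
  obtain ⟨b, rfl⟩ := hφ.tensorSpline_le_range (tensorSpline_mono hMN hv)
  rw [← map_sub] at horth ⊢
  have horth_v := horth _ hv
  have horth_R := horth _ (tensorSum_dirOps_mem_tensorSpline hR fun k ↦
    (a - b) k / energyWeight l k)
  rw [hφ.aForm_tensorSum] at horth_v horth_R
  have henergy : aForm d (tensorSum (fun _ ↦ φ) a) (tensorSum (fun _ ↦ φ) a) =
      wsq (energyWeight l) a := by
    simp only [hφ.aForm_tensorSum, wsq, sq, mul_assoc]
  rw [hφ.l2normSqD_tensorSum, henergy]
  calc wsq 1 (a - b)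
      ≤ (2 * 4) ^ Fintype.card (Fin d) * (2 * (1 / M) ^ 2) * wsq (energyWeight l) (a - b) :=
        hstable.wsq_one_le_of_orthogonal hl (by norm_num) (by positivity) _ horth_R
    _ = 2 * 8 ^ d * (1 / M) ^ 2 * wsq (energyWeight l) (a - b) := by
        rw [Fintype.card_fin, show (2 * 4 : ℝ) = 8 by norm_num]
        ring
    _ ≤ 2 * 8 ^ d * (1 / M) ^ 2 * wsq (energyWeight l) a :=
        mul_le_mul_of_nonneg_left (wsq_sub_le_of_orthogonal (energyWeight_nonneg hl) horth_v)
          (by positivity)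

end TensorSplines

theorem coarse_grid_approximation_general {d M N p : ℕ} [NeZero N] (hMN : M ∣ N) (hp : 1 ≤ p)
    {u v : (Fin d → ℝ) → ℝ} (hu : u ∈ TensorSpline d N p) (hv : v ∈ TensorSpline d M p)
    (horth : ∀ w ∈ TensorSpline d M p, aForm d (u - v) w = 0) :
    √(l2normSqD d (u - v)) ≤ √(2 * 8 ^ d) * (1 / M) * √(aForm d u u) := by
  rw [← Real.sqrt_sq (by positivity : (0 : ℝ) ≤ 1 / M), ← Real.sqrt_mul (by positivity),
    ← Real.sqrt_mul (by positivity)]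
  exact Real.sqrt_le_sqrt (l2normSqD_sub_le_of_galerkin hMN hp hu hv horth)

/-- Lemma `lemma:approx:dd`: for every dimension `d ≥ 1` there is a
constant `c > 0` independent of `h = 1/m` and `p` (possibly depending on `d`) such
that the `a(·,·)`-orthogonal (Galerkin) projector `T_c : S^d → (S_c)^d` onto the
coarse tensor product spline space satisfies
`‖u − T_c u‖_{L²(Ω)} ≤ c · h · a(u,u)^{1/2}` for all `u ∈ S^d`. -/
theorem coarse_grid_approximation :
    ∀ d : ℕ, 1 ≤ d → ∃ c : ℝ, 0 < c ∧ ∀ m p : ℕ, m % 2 = 0 → 2 ≤ m → 1 ≤ p →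
      ∀ u : (Fin d → ℝ) → ℝ, u ∈ TensorSpline d m p →
      ∀ v : (Fin d → ℝ) → ℝ, IsGalerkinCoarseProj d m p u v →
        Real.sqrt (l2normSqD d (u - v)) ≤
          c * (1 / (m : ℝ)) * Real.sqrt (aForm d u u) := by
  intro d _
  refine ⟨2 * √(2 * 8 ^ d), by positivity, fun m p hm hm2 hp u hu v hv ↦ ?_⟩
  have : NeZero m := ⟨by omega⟩
  have h2m : 2 ∣ m := Nat.dvd_of_mod_eq_zero hm
  convert coarse_grid_approximation_general (Nat.div_dvd_of_dvd h2m) hp hu hv.1 hv.2 using 2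
  rw [Nat.cast_div h2m two_ne_zero]
  field_simp
  norm_num

end SplineMG
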